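/- arXiv:1705.09195 — 4 statements merged into one kernel-verified Lean document; each statement's English description precedes it below -/
import Mathlib

section
/- Let X ⊆ P² be a k-configuration of type (d₁,…,d_s) with (d₁,…,d_s) ≠ (1). Then there exists an integer m₀ such that for all integers m ≥ m₀, the first difference ΔH_{mX}(m·d_s − 1) of the Hilbert function of the fat point scheme mX equals the number of lines in P² containing exactly d_s points of X. Moreover, if d_s > s one can take m₀ = 2, and if d_s = s one can take m₀ = s + 1. -/
/-- The projective plane over a field `K`, as the projectivization of `K³`. -/
abbrev P2 (K : Type) [Field K] := Projectivization K (Fin 3 → K)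

/-- A line in `P2 K`: a 2-dimensional linear subspace of `K³`. -/
structure ProjLine (K : Type) [Field K] where
  toSubmodule : Submodule K (Fin 3 → K)
  finrank_eq_two : Module.finrank K toSubmodule = 2

/-- The set of points of `P2 K` lying on a line. -/
def ProjLine.points {K : Type} [Field K] (L : ProjLine K) : Set (P2 K) :=
  {p | p.submodule ≤ L.toSubmodule}

/-- The homogeneous prime ideal of a point of `P2 K`: the ideal generated by
the linear forms vanishing at the point. -/
noncomputable def pointIdeal {K : Type} [Field K] (p : P2 K) :
    Ideal (MvPolynomial (Fin 3) K) :=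
  Ideal.span {f | f.IsHomogeneous 1 ∧ MvPolynomial.eval p.rep f = 0}

/-- The defining ideal `I_{mX} = ⋂_{P ∈ X} I_P^m` of the fat point scheme `mX`. -/
noncomputable def fatIdeal {K : Type} [Field K] (X : Set (P2 K)) (m : ℕ) :
    Ideal (MvPolynomial (Fin 3) K) :=
  ⨅ p ∈ X, (pointIdeal p) ^ m

/-- The Hilbert function of `R/I`: `H(t) = dim_K R_t - dim_K I_t`. -/
noncomputable def hilb {K : Type} [Field K] (I : Ideal (MvPolynomial (Fin 3) K)) (t : ℕ) : ℕ :=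
  Module.finrank K ↥(MvPolynomial.homogeneousSubmodule (Fin 3) K t) -
    Module.finrank K ↥(Submodule.restrictScalars K (I : Submodule (MvPolynomial (Fin 3) K) (MvPolynomial (Fin 3) K)) ⊓ MvPolynomial.homogeneousSubmodule (Fin 3) K t)

/-- The Hilbert function extended to `ℤ`, with `H(t) = 0` for `t < 0`. -/
noncomputable def hilbZ {K : Type} [Field K] (I : Ideal (MvPolynomial (Fin 3) K)) (t : ℤ) : ℤ :=
  if t < 0 then 0 else hilb I t.toNat

/-- The first difference `ΔH(t) = H(t) - H(t-1)` of the Hilbert function. -/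
noncomputable def deltaHilb {K : Type} [Field K] (I : Ideal (MvPolynomial (Fin 3) K)) (t : ℤ) : ℤ :=
  hilbZ I t - hilbZ I (t - 1)

/-- `X` is a k-configuration of type `(d 0, …, d (s-1))` defined using the subsets
`Xs 0, …, Xs (s-1)` and the (distinct) lines `Ls 0, …, Ls (s-1)`. -/
structure IsKConfig {K : Type} [Field K] {s : ℕ} (X : Set (P2 K)) (d : Fin s → ℕ)
    (Xs : Fin s → Set (P2 K)) (Ls : Fin s → ProjLine K) : Prop where
  one_le : ∀ i, 1 ≤ d i
  strictMono : StrictMono d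
  lines_distinct : Function.Injective Ls
  union_eq : X = ⋃ i, Xs i
  card_eq : ∀ i, (Xs i).ncard = d i
  subset_line : ∀ i, Xs i ⊆ (Ls i).points
  not_mem : ∀ i j : Fin s, j < i → ∀ p ∈ Xs j, p ∉ (Ls i).points

/-!
Let `D` be the largest entry of the type, `s` its length, and suppose that `q` lines contain `D`
points of `X`. By Bézout, each of these lines is a component of every curve of degree at most
`m * D - 1` in the ideal of `mX`, so removing it does not change the dimension of the ideal in the
degrees `m * D - 1` and `m * D - 2`. If the residual scheme imposes independent conditions on forms
of degree at least `m * D - 2 - q`, then both dimensions are differences of a binomial coefficient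
and the degree of that scheme, and the first difference comes out as `q`.

A scheme imposes independent conditions in degree `t` if its residual with respect to a line does so
in degree `t - 1` and its intersection with the line has degree at most `t + 1`. Lines are therefore
removed one at a time, in rounds consisting of the lines of the configuration in decreasing order,
until nothing is left. If `D > s`, every round goes through. If `D = s`, the first of the subsets is
a single point `P`, and in the first `s` rounds the first line is replaced by a line joining `P` to
a point on the last line, beginning with those that contain `D` points.
-/

open MvPolynomial Module

section Coordinates

variable {σ K : Type*} [Field K]

lemma add_le_degree_of_mem_span_X_ne_pow {i : σ} {m : ℕ} {f : MvPolynomial σ K}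
    (hf : f ∈ Ideal.span (X '' {j | j ≠ i} : Set (MvPolynomial σ K)) ^ m) :
    ∀ d ∈ f.support, d i + m ≤ d.degree := by
  classical
  induction m generalizing f with
  | zero => exact fun d _ ↦ Finsupp.le_degree i d
  | succ m ih =>
    rw [pow_succ] at hf
    refine Submodule.mul_induction_on hf (fun g hg x hx d hd ↦ ?_)
      fun g h hg hh d hd ↦ (Finset.mem_union.mp (support_add hd)).elim (hg d) (hh d)
    obtain ⟨a, ha, b, hb, rfl⟩ := Finset.mem_add.mp (support_mul g x hd)
    obtain ⟨j, hj, hbj⟩ := mem_ideal_span_X_image.mp hx b hb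
    have hb_degree : b i + 1 ≤ b.degree := by
      have h_erase := Finsupp.le_degree j (b.erase i)
      rw [Finsupp.erase_ne hj] at h_erase
      rw [← Finsupp.single_add_erase i b, map_add, Finsupp.degree_single]
      simp only [Finsupp.add_apply, Finsupp.single_eq_same, Finsupp.erase_same]
      lia
    have ha_degree := ih hg a ha
    rw [map_add, Finsupp.add_apply]
    lia

lemma monomial_mem_span_X_ne_pow {i : σ} {m : ℕ} {d : σ →₀ ℕ} (hd : d i + m ≤ d.degree) (c : K) :
    monomial d c ∈ Ideal.span (X '' {j | j ≠ i} : Set (MvPolynomial σ K)) ^ m := by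
  induction m generalizing d with
  | zero => simp
  | succ m ih =>
    obtain ⟨j, hji, hj⟩ : ∃ j, j ≠ i ∧ d j ≠ 0 := by
      by_contra! h
      have hd_single : d = Finsupp.single i (d i) := by
        ext j
        by_cases hj : j = i
        · simp [hj]
        · simp [h j hj, Finsupp.single_eq_of_ne hj]
      rw [hd_single, Finsupp.degree_single] at hd
      simp at hd
    obtain ⟨e, rfl⟩ : ∃ e, d = e + Finsupp.single j 1 :=
      ⟨d - Finsupp.single j 1, (tsub_add_cancel_of_le (by simpa [Nat.one_le_iff_ne_zero])).symm⟩
    rw [map_add, Finsupp.degree_single, Finsupp.add_apply, Finsupp.single_eq_of_ne hji.symm] at hd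
    rw [monomial_add_single, pow_one, pow_succ]
    exact Ideal.mul_mem_mul (ih (by lia)) (Ideal.subset_span ⟨j, hji, rfl⟩)

lemma mem_span_X_ne_pow_iff {i : σ} {m : ℕ} {f : MvPolynomial σ K} :
    f ∈ Ideal.span (X '' {j | j ≠ i} : Set (MvPolynomial σ K)) ^ m ↔
      ∀ d ∈ f.support, d i + m ≤ d.degree := by
  refine ⟨add_le_degree_of_mem_span_X_ne_pow, fun hf ↦ ?_⟩
  rw [f.as_sum]
  exact Ideal.sum_mem _ fun d hd ↦ monomial_mem_span_X_ne_pow (hf d hd) _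

variable [Fintype σ] [DecidableEq σ]

lemma eq_sum_C_eval_mul_X {l : MvPolynomial σ K}
    (hl : l.IsHomogeneous 1) : l = ∑ j, C (eval (Pi.single j 1) l) * X j := by
  rw [← mem_homogeneousSubmodule, homogeneousSubmodule_one_eq_span_X] at hl
  induction hl using Submodule.span_induction with
  | mem x hx =>
    obtain ⟨i, rfl⟩ := hx
    simp [Pi.single_apply]
  | zero => simp
  | add x y _ _ hx hy =>
    conv_lhs => rw [hx, hy]
    simp [add_mul, Finset.sum_add_distrib]
  | smul c x _ hx =>
    conv_lhs => rw [hx]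
    simp [Finset.smul_sum, smul_eq_C_mul, mul_assoc]

/-- Rewriting a polynomial function on `σ → K` in the coordinates of the basis `b`. -/
noncomputable def coordChange (b : Basis σ K (σ → K)) : MvPolynomial σ K ≃ₐ[K] MvPolynomial σ K :=
  .ofAlgHom (bind₁ ((Pi.basisFun K σ).toMatrix b).toMvPolynomial)
    (bind₁ (b.toMatrix (Pi.basisFun K σ)).toMvPolynomial)
    (by ext1 i; simp [← Matrix.toMvPolynomial_mul, -Pi.basisFun_apply])
    (by ext1 i; simp [← Matrix.toMvPolynomial_mul])

variable (b : Basis σ K (σ → K))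

lemma eval_coordChange (v : σ → K) (f : MvPolynomial σ K) :
    eval v (coordChange b f) = eval (∑ j, v j • b j) f := by
  have : (aeval v).comp (coordChange b).toAlgHom = aeval (R := K) (∑ j, v j • b j) := by
    ext i
    simp [coordChange, Matrix.toMvPolynomial_eval_eq_apply, Matrix.mulVec, dotProduct,
      Basis.toMatrix_apply, mul_comm]
  simpa using DFunLike.congr_fun this f

lemma isHomogeneous_coordChange {f : MvPolynomial σ K} {t : ℕ} (hf : f.IsHomogeneous t) :
    (coordChange b f).IsHomogeneous t :=
  one_mul t ▸ hf.aeval _ fun i ↦ Matrix.toMvPolynomial_isHomogeneous _ i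

lemma isHomogeneous_coordChange_symm {f : MvPolynomial σ K} {t : ℕ} (hf : f.IsHomogeneous t) :
    ((coordChange b).symm f).IsHomogeneous t :=
  one_mul t ▸ hf.aeval _ fun i ↦ Matrix.toMvPolynomial_isHomogeneous _ i

lemma coordChange_linear {l : MvPolynomial σ K} (hl : l.IsHomogeneous 1) :
    coordChange b l = ∑ j, C (eval (b j) l) * X j := by
  rw [eq_sum_C_eval_mul_X (isHomogeneous_coordChange b hl)]
  simp [eval_coordChange, Pi.single_apply]

end Coordinates

section PointIdeal

variable {K : Type} [Field K] {p : P2 K} {b : Basis (Fin 3) K (Fin 3 → K)} {i : Fin 3}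

lemma map_coordChange_pointIdeal (hi : b i = p.rep) :
    (pointIdeal p).map (coordChange b) = Ideal.span (X '' {j | j ≠ i}) := by
  rw [pointIdeal, Ideal.map_span]
  refine le_antisymm (Ideal.span_le.mpr ?_) (Ideal.span_le.mpr ?_)
  · rintro _ ⟨l, ⟨hl, hlp⟩, rfl⟩
    rw [coordChange_linear b hl]
    refine Ideal.sum_mem _ fun j _ ↦ ?_
    by_cases hj : j = i
    · simp [hj, hi, hlp]
    · exact Ideal.mul_mem_left _ _ (Ideal.subset_span ⟨j, hj, rfl⟩)
  · rintro _ ⟨j, hj, rfl⟩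
    refine Ideal.subset_span ⟨(coordChange b).symm (X j),
      ⟨isHomogeneous_coordChange_symm b (isHomogeneous_X K j), ?_⟩, by simp⟩
    have := eval_coordChange b (Pi.single i 1) ((coordChange b).symm (X j))
    simp_all [Pi.single_apply, eq_comm]

lemma mem_pointIdeal_pow_iff (hi : b i = p.rep) {m : ℕ} {f : MvPolynomial (Fin 3) K} :
    f ∈ pointIdeal p ^ m ↔ ∀ d ∈ (coordChange b f).support, d i + m ≤ d.degree := by
  rw [← mem_span_X_ne_pow_iff, ← map_coordChange_pointIdeal hi, ← Ideal.map_pow]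
  simp [Ideal.mem_map_of_equiv]

end PointIdeal

section Lines

variable {K : Type} [Field K] {L L' : ProjLine K} {p q : P2 K}

noncomputable instance : DecidableEq (P2 K) := Classical.decEq _

namespace ProjLine

lemma ext_toSubmodule (h : L.toSubmodule = L'.toSubmodule) : L = L' := by
  cases L; cases L'; congr

lemma mem_points_iff : p ∈ L.points ↔ p.rep ∈ L.toSubmodule := by
  simp [points, Projectivization.submodule_eq]

lemma toSubmodule_ne_top : L.toSubmodule ≠ ⊤ := fun h ↦ by
  have := L.finrank_eq_two
  rw [h, finrank_top, Module.finrank_fin_fun] at this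
  lia

noncomputable instance : DecidableEq (ProjLine K) := Classical.decEq _

noncomputable instance : DecidablePred (· ∈ L.points) := Classical.decPred _

variable (L) in
lemma points_nonempty : L.points.Nonempty := by
  obtain ⟨v, hv, hv0⟩ := L.toSubmodule.exists_mem_ne_zero_of_ne_bot fun h ↦ by
    have := L.finrank_eq_two
    rw [h, finrank_bot] at this
    lia
  exact ⟨.mk K v hv0, by simpa [points, Projectivization.submodule_mk] using hv⟩

lemma eq_span_pair {v w : Fin 3 → K} (h : LinearIndependent K ![v, w]) (hv : v ∈ L.toSubmodule)
    (hw : w ∈ L.toSubmodule) : L.toSubmodule = Submodule.span K (Set.range ![v, w]) := by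
  refine (Submodule.eq_of_le_of_finrank_eq ?_ ?_).symm
  · simp [Submodule.span_le, Set.insert_subset_iff, hv, hw]
  · rw [finrank_span_eq_card h, L.finrank_eq_two, Fintype.card_fin]

/-- The line through two independent vectors. -/
def ofPair {v w : Fin 3 → K} (h : LinearIndependent K ![v, w]) : ProjLine K :=
  ⟨Submodule.span K (Set.range ![v, w]), by rw [finrank_span_eq_card h, Fintype.card_fin]⟩

variable (p) in
lemma exists_mem : ∃ L : ProjLine K, p ∈ L.points := by
  obtain ⟨w, hw⟩ := exists_linearIndependent_pair_of_one_lt_finrank (R := K)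
    (M := Fin 3 → K) (by simp) p.rep_nonzero
  exact ⟨ofPair hw, mem_points_iff.mpr (Submodule.subset_span ⟨0, rfl⟩)⟩

variable (p q) in
lemma exists_mem_mem : ∃ L : ProjLine K, p ∈ L.points ∧ q ∈ L.points := by
  rcases eq_or_ne p q with rfl | hpq
  · exact (exists_mem p).imp fun _ hL ↦ ⟨hL, hL⟩
  · exact ⟨ofPair (Projectivization.linearIndependent_pair_iff_ne.mpr hpq),
      mem_points_iff.mpr (Submodule.subset_span ⟨0, rfl⟩),
      mem_points_iff.mpr (Submodule.subset_span ⟨1, rfl⟩)⟩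

lemma eq_of_mem_of_mem (hpq : p ≠ q) (hp : p ∈ L.points) (hq : q ∈ L.points)
    (hp' : p ∈ L'.points) (hq' : q ∈ L'.points) : L = L' := by
  rw [mem_points_iff] at hp hq hp' hq'
  have h := Projectivization.linearIndependent_pair_iff_ne.mpr hpq
  exact ext_toSubmodule ((eq_span_pair h hp hq).trans (eq_span_pair h hp' hq').symm)

variable (p q) in
/-- A line through `p` and `q`; it is an arbitrary line through `p` if `p = q`. -/
noncomputable def through : ProjLine K := (exists_mem_mem p q).choose

variable (p q) in
lemma left_mem_through : p ∈ (through p q).points := (exists_mem_mem p q).choose_spec.1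

variable (p q) in
lemma right_mem_through : q ∈ (through p q).points := (exists_mem_mem p q).choose_spec.2

end ProjLine

/-- A basis of `K³` whose first two vectors span the line `L`. -/
structure IsFrame (L : ProjLine K) (b : Basis (Fin 3) K (Fin 3 → K)) : Prop where
  zero_mem : b 0 ∈ L.toSubmodule
  one_mem : b 1 ∈ L.toSubmodule

lemma exists_isFrame {v x : Fin 3 → K} (hv0 : v ≠ 0) (hv : v ∈ L.toSubmodule)
    (hx : x ∉ L.toSubmodule) : ∃ b, IsFrame L b ∧ b 0 = v ∧ b 2 = x := by
  obtain ⟨w, hw, hwv⟩ : ∃ w ∈ L.toSubmodule, w ∉ Submodule.span K {v} := by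
    refine SetLike.not_le_iff_exists.mp fun hle ↦ ?_
    have := Submodule.finrank_mono hle
    rw [L.finrank_eq_two, finrank_span_singleton hv0] at this
    lia
  have hvw : LinearIndependent K ![v, w] := (LinearIndependent.pair_iff' hv0).mpr
    fun a ha ↦ hwv (Submodule.mem_span_singleton.mpr ⟨a, ha⟩)
  rw [ProjLine.eq_span_pair hvw hv hw] at hx
  let b := basisOfLinearIndependentOfCardEqFinrank (hvw.finSnoc hx) (by simp)
  have hb : ⇑b = Fin.snoc ![v, w] x := coe_basisOfLinearIndependentOfCardEqFinrank _ _
  exact ⟨b, ⟨by simpa [hb, Fin.snoc] using hv, by simpa [hb, Fin.snoc] using hw⟩,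
    by simp [hb, Fin.snoc], by simp [hb, Fin.snoc]⟩

lemma exists_isFrame_of_mem (hp : p ∈ L.points) : ∃ b, IsFrame L b ∧ b 0 = p.rep := by
  obtain ⟨x, -, hx⟩ := SetLike.exists_of_lt (lt_top_iff_ne_top.mpr L.toSubmodule_ne_top)
  obtain ⟨b, hb, h0, -⟩ := exists_isFrame p.rep_nonzero (ProjLine.mem_points_iff.mp hp) hx
  exact ⟨b, hb, h0⟩

lemma exists_isFrame_of_notMem {x : Fin 3 → K} (hx : x ∉ L.toSubmodule) :
    ∃ b, IsFrame L b ∧ b 2 = x := by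
  obtain ⟨p, hp⟩ := L.points_nonempty
  obtain ⟨b, hb, -, h2⟩ := exists_isFrame p.rep_nonzero (ProjLine.mem_points_iff.mp hp) hx
  exact ⟨b, hb, h2⟩

lemma exists_basis_zero_eq_rep (p : P2 K) : ∃ b : Basis (Fin 3) K (Fin 3 → K), b 0 = p.rep :=
  let ⟨_, hL⟩ := ProjLine.exists_mem p
  let ⟨b, _, hb⟩ := exists_isFrame_of_mem hL
  ⟨b, hb⟩

lemma IsFrame.mem_iff {b : Basis (Fin 3) K (Fin 3 → K)} (hb : IsFrame L b) {v : Fin 3 → K} :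
    v ∈ L.toSubmodule ↔ b.repr v 2 = 0 := by
  have hb2 : b 2 ∉ L.toSubmodule := fun h2 ↦ by
    refine L.toSubmodule_ne_top (top_le_iff.mp ?_)
    rw [← b.span_eq, Submodule.span_le, Set.range_subset_iff, Fin.forall_fin_succ,
      Fin.forall_fin_two]
    exact ⟨hb.zero_mem, hb.one_mem, h2⟩
  conv_lhs => rw [← b.sum_repr v, Fin.sum_univ_three]
  rw [Submodule.add_mem_iff_right _ (add_mem (L.toSubmodule.smul_mem _ hb.zero_mem)
    (L.toSubmodule.smul_mem _ hb.one_mem))]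
  refine ⟨fun h ↦ by_contra fun h0 ↦ hb2 ((L.toSubmodule.smul_mem_iff h0).mp h),
    fun h ↦ by simp [h]⟩

/-- `l` is a linear form defining the line `L`. -/
structure ProjLine.IsEquation (L : ProjLine K) (l : MvPolynomial (Fin 3) K) : Prop where
  isHomogeneous : l.IsHomogeneous 1
  eval_eq_zero_iff : ∀ v, eval v l = 0 ↔ v ∈ L.toSubmodule

variable {l : MvPolynomial (Fin 3) K} {b : Basis (Fin 3) K (Fin 3 → K)}

variable (L) in
lemma ProjLine.exists_isEquation : ∃ l, L.IsEquation l := by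
  obtain ⟨x, -, hx⟩ := SetLike.exists_of_lt (lt_top_iff_ne_top.mpr L.toSubmodule_ne_top)
  obtain ⟨b, hb, -⟩ := exists_isFrame_of_notMem hx
  refine ⟨(coordChange b).symm (X 2),
    isHomogeneous_coordChange_symm b (isHomogeneous_X K 2), fun v ↦ ?_⟩
  conv_lhs => rw [← b.sum_repr v]
  rw [hb.mem_iff, ← eval_coordChange, AlgEquiv.apply_symm_apply, eval_X]

namespace ProjLine.IsEquation

lemma ne_zero (hl : L.IsEquation l) : l ≠ 0 := by
  rintro rfl
  exact L.toSubmodule_ne_top (eq_top_iff.mpr fun v _ ↦ (hl.eval_eq_zero_iff v).mp (map_zero _))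

lemma mem_pointIdeal (hl : L.IsEquation l) (hp : p ∈ L.points) : l ∈ pointIdeal p :=
  Ideal.subset_span ⟨hl.isHomogeneous, (hl.eval_eq_zero_iff _).mpr (mem_points_iff.mp hp)⟩

lemma exists_coordChange_eq (hl : L.IsEquation l) (hb : IsFrame L b) :
    ∃ c ≠ 0, coordChange b l = C c * X 2 := by
  refine ⟨eval (b 2) l, fun h ↦ ?_, ?_⟩
  · have := hb.mem_iff.mp ((hl.eval_eq_zero_iff _).mp h)
    simp at this
  · rw [coordChange_linear b hl.isHomogeneous, Fin.sum_univ_three,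
      (hl.eval_eq_zero_iff _).mpr hb.zero_mem, (hl.eval_eq_zero_iff _).mpr hb.one_mem]
    simp

lemma add_single_mem_support (hl : L.IsEquation l) (hb : IsFrame L b)
    {g : MvPolynomial (Fin 3) K} {d : Fin 3 →₀ ℕ} (hd : d ∈ (coordChange b g).support) :
    d + Finsupp.single 2 1 ∈ (coordChange b (l * g)).support := by
  obtain ⟨c, hc, hlc⟩ := hl.exists_coordChange_eq hb
  rw [map_mul, hlc, mul_assoc, MvPolynomial.mem_support_iff, coeff_C_mul, add_comm, coeff_X_mul]
  exact mul_ne_zero hc (MvPolynomial.mem_support_iff.mp hd)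

lemma mem_pow_of_mul_mem_of_notMem (hl : L.IsEquation l) (hp : p ∉ L.points) {m : ℕ}
    {g : MvPolynomial (Fin 3) K} (h : l * g ∈ pointIdeal p ^ m) : g ∈ pointIdeal p ^ m := by
  obtain ⟨b, hb, hbp⟩ := exists_isFrame_of_notMem (mem_points_iff.not.mp hp)
  rw [mem_pointIdeal_pow_iff hbp] at h ⊢
  intro d hd
  have := h _ (hl.add_single_mem_support hb hd)
  simp only [Finsupp.add_apply, Finsupp.single_eq_same, map_add, Finsupp.degree_single] at this
  lia

lemma mem_pow_of_mul_mem_of_mem (hl : L.IsEquation l) (hp : p ∈ L.points) {m : ℕ}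
    {g : MvPolynomial (Fin 3) K} (h : l * g ∈ pointIdeal p ^ m) :
    g ∈ pointIdeal p ^ (m - 1) := by
  obtain ⟨b, hb, hbp⟩ := exists_isFrame_of_mem hp
  rw [mem_pointIdeal_pow_iff hbp] at h ⊢
  intro d hd
  have := h _ (hl.add_single_mem_support hb hd)
  simp only [Finsupp.add_apply, map_add, Finsupp.degree_single,
    Finsupp.single_eq_of_ne (show (0 : Fin 3) ≠ 2 by decide)] at this
  have := Finsupp.le_degree 0 d
  lia

end ProjLine.IsEquation

end Lines

section LocalConditions

variable {K : Type} [Field K] {L : ProjLine K} {p q : P2 K}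
  {b : Basis (Fin 3) K (Fin 3 → K)} {f l : MvPolynomial (Fin 3) K} {t k : ℕ}

/-- The coefficients of a form of degree `t` that obstruct its vanishing to order `k + 1` at the
point `(1 : 0 : 0)` of the frame `b`, once it vanishes to order `k`. -/
noncomputable def leadingCoeffs (b : Basis (Fin 3) K (Fin 3 → K)) (t k : ℕ) :
    MvPolynomial (Fin 3) K →ₗ[K] (Fin (k + 1) → K) :=
  LinearMap.pi fun j ↦ (lcoeff K (Finsupp.equivFunOnFinite.symm ![t - k, (j : ℕ), k - j])) ∘ₗ
    (coordChange b).toLinearMap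

lemma degree_of_mem_support_coordChange (hf : f.IsHomogeneous t) {d : Fin 3 →₀ ℕ}
    (hd : d ∈ (coordChange b f).support) : d.degree = t := by
  by_contra hdt
  exact MvPolynomial.mem_support_iff.mp hd ((isHomogeneous_coordChange b hf).coeff_eq_zero hdt)

lemma mem_pointIdeal_pow_succ (hb : b 0 = p.rep) (hf : f.IsHomogeneous t)
    (hfk : f ∈ pointIdeal p ^ k) (h : leadingCoeffs b t k f = 0) :
    f ∈ pointIdeal p ^ (k + 1) := by
  rw [mem_pointIdeal_pow_iff hb] at hfk ⊢
  intro d hd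
  refine (hfk d hd).lt_of_ne fun heq ↦ MvPolynomial.mem_support_iff.mp hd ?_
  have hdt := degree_of_mem_support_coordChange hf hd
  have hsum : d 0 + d 1 + d 2 = d.degree := by
    rw [Finsupp.degree_eq_sum, Fin.sum_univ_three]
  have hd_eq : d = Finsupp.equivFunOnFinite.symm ![t - k, d 1, k - d 1] := by
    ext i
    fin_cases i <;> simp <;> lia
  rw [hd_eq]
  exact congrFun h ⟨d 1, by lia⟩

/-- Restriction to the line spanned by `b 0` and `b 1`, in the affine coordinate for which `b 0` is
the point at infinity. -/
noncomputable def restrictToLine (b : Basis (Fin 3) K (Fin 3 → K)) :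
    MvPolynomial (Fin 3) K →ₐ[K] Polynomial K :=
  (aeval ![Polynomial.X, 1, 0]).comp (coordChange b).toAlgHom

lemma coeff_restrictToLine_eq_sum (j : ℕ) : (restrictToLine b f).coeff j =
    ∑ d ∈ (coordChange b f).support,
      if d 2 = 0 ∧ d 0 = j then coeff d (coordChange b f) else 0 := by
  have h : restrictToLine b f = aeval ![Polynomial.X, 1, 0] (coordChange b f) := rfl
  rw [h, aeval_def, eval₂_eq', Polynomial.finsetSum_coeff]
  refine Finset.sum_congr rfl fun d _ ↦ ?_
  by_cases h2 : d 2 = 0 <;> simp [Fin.prod_univ_three, h2, Polynomial.coeff_X_pow, eq_comm]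

lemma coeff_restrictToLine (hf : f.IsHomogeneous t) {d : Fin 3 →₀ ℕ} (hd : d 2 = 0)
    (hdt : d.degree = t) :
    (restrictToLine b f).coeff (d 0) = coeff d (coordChange b f) := by
  rw [coeff_restrictToLine_eq_sum, Finset.sum_eq_single d]
  · simp [hd]
  · refine fun e he hed ↦ if_neg fun ⟨he2, he0⟩ ↦ hed ?_
    have het := degree_of_mem_support_coordChange hf he
    rw [Finsupp.degree_eq_sum, Fin.sum_univ_three] at hdt het
    ext i
    fin_cases i <;> simp <;> lia
  · simp [hd]

lemma natDegree_restrictToLine_add_le (hb : b 0 = p.rep) (hf : f.IsHomogeneous t)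
    (hfk : f ∈ pointIdeal p ^ k) (h0 : restrictToLine b f ≠ 0) :
    (restrictToLine b f).natDegree + k ≤ t := by
  have hlead := Polynomial.leadingCoeff_ne_zero.mpr h0
  rw [Polynomial.leadingCoeff, coeff_restrictToLine_eq_sum] at hlead
  obtain ⟨d, hd, hd0⟩ := Finset.exists_ne_zero_of_sum_ne_zero hlead
  rw [← (ite_ne_right_iff.mp hd0).1.2, ← degree_of_mem_support_coordChange hf hd]
  exact (mem_pointIdeal_pow_iff hb).mp hfk d hd

lemma apply_two_ne_zero_of_restrictToLine_eq_zero (hf : f.IsHomogeneous t)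
    (h : restrictToLine b f = 0) {d : Fin 3 →₀ ℕ} (hd : d ∈ (coordChange b f).support) :
    d 2 ≠ 0 := fun hd2 ↦ by
  refine MvPolynomial.mem_support_iff.mp hd ?_
  rw [← coeff_restrictToLine hf hd2 (degree_of_mem_support_coordChange hf hd), h,
    Polynomial.coeff_zero]

lemma eq_zero_of_restrictToLine_eq_zero (hf : f.IsHomogeneous 0) (h : restrictToLine b f = 0) :
    f = 0 := by
  refine (map_eq_zero_iff _ (coordChange b).injective).mp ?_
  rw [← MvPolynomial.support_eq_empty, Finset.eq_empty_iff_forall_notMem]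
  refine fun d hd ↦ apply_two_ne_zero_of_restrictToLine_eq_zero hf h hd ?_
  have := degree_of_mem_support_coordChange hf hd
  have := Finsupp.le_degree 2 d
  lia

lemma ProjLine.IsEquation.exists_eq_mul (hl : L.IsEquation l) (hb : IsFrame L b)
    (hf : f.IsHomogeneous (t + 1)) (h : restrictToLine b f = 0) :
    ∃ g, g.IsHomogeneous t ∧ f = l * g := by
  obtain ⟨c, hc, hlc⟩ := hl.exists_coordChange_eq hb
  obtain ⟨G, hG⟩ : X 2 ∣ coordChange b f := by
    rw [← Ideal.mem_span_singleton, ← Set.image_singleton, mem_ideal_span_X_image]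
    exact fun d hd ↦ ⟨2, rfl, apply_two_ne_zero_of_restrictToLine_eq_zero hf h hd⟩
  have hG_hom : G.IsHomogeneous t := fun d hd ↦ by
    have hd' : d + Finsupp.single 2 1 ∈ (coordChange b f).support := by
      rwa [MvPolynomial.mem_support_iff, hG, add_comm, coeff_X_mul]
    have := degree_of_mem_support_coordChange hf hd'
    rw [map_add, Finsupp.degree_single, add_left_inj] at this
    rwa [Finsupp.degree_eq_weight_one] at this
  refine ⟨(coordChange b).symm (C c⁻¹ * G), isHomogeneous_coordChange_symm b (hG_hom.C_mul _), ?_⟩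
  apply (coordChange b).injective
  rw [map_mul, AlgEquiv.apply_symm_apply, hlc, hG,
    show C c * X 2 * (C c⁻¹ * G) = C (c * c⁻¹) * (X 2 * G) by rw [C_mul]; ring,
    mul_inv_cancel₀ hc, C_1, one_mul]

lemma restrictToLine_linear (hl : l.IsHomogeneous 1) :
    restrictToLine b l =
      Polynomial.C (eval (b 0) l) * Polynomial.X + Polynomial.C (eval (b 1) l) := by
  have h : restrictToLine b l = aeval ![Polynomial.X, 1, 0] (coordChange b l) := rfl
  rw [h, coordChange_linear b hl]
  simp [Fin.sum_univ_three, Polynomial.C_eq_algebraMap]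

/-- The affine coordinate on the line spanned by `b 0` and `b 1`; the value at the point `b 0`, at
infinity, is the junk value `0`. -/
noncomputable def affineCoord (b : Basis (Fin 3) K (Fin 3 → K)) (p : P2 K) : K :=
  b.repr p.rep 0 / b.repr p.rep 1

lemma IsFrame.repr_one_ne_zero (hb : IsFrame L b) (hq : b 0 = q.rep) (hp : p ∈ L.points)
    (hpq : p ≠ q) : b.repr p.rep 1 ≠ 0 := fun h1 ↦ by
  have hrep := b.sum_repr p.rep
  rw [Fin.sum_univ_three, hb.mem_iff.mp (ProjLine.mem_points_iff.mp hp), h1, zero_smul, zero_smul,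
    add_zero, add_zero, hq] at hrep
  exact (LinearIndependent.pair_iff' q.rep_nonzero).mp
    (Projectivization.linearIndependent_pair_iff_ne.mpr hpq.symm) _ hrep

lemma IsFrame.injOn_affineCoord (hb : IsFrame L b) (hq : b 0 = q.rep) :
    Set.InjOn (affineCoord b) (L.points \ {q}) := by
  rintro p ⟨hp, hpq⟩ p' ⟨hp', hpq'⟩ h
  have h1 := hb.repr_one_ne_zero hq hp hpq
  have h1' := hb.repr_one_ne_zero hq hp' hpq'
  by_contra hpp
  refine (LinearIndependent.pair_iff' p.rep_nonzero).mp
    (Projectivization.linearIndependent_pair_iff_ne.mpr hpp) (b.repr p'.rep 1 / b.repr p.rep 1) ?_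
  rw [affineCoord, affineCoord, div_eq_div_iff h1 h1'] at h
  refine b.ext_elem fun i ↦ ?_
  rw [map_smul, Finsupp.smul_apply, smul_eq_mul, div_mul_eq_mul_div, div_eq_iff h1]
  fin_cases i
  · simpa [mul_comm] using h
  · rfl
  · simp [hb.mem_iff.mp (ProjLine.mem_points_iff.mp hp),
      hb.mem_iff.mp (ProjLine.mem_points_iff.mp hp')]

lemma IsFrame.map_restrictToLine_pointIdeal_le (hb : IsFrame L b) (hq : b 0 = q.rep)
    (hp : p ∈ L.points) (hpq : p ≠ q) : (pointIdeal p).map (restrictToLine b) ≤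
      Ideal.span {Polynomial.X - Polynomial.C (affineCoord b p)} := by
  have h1 := hb.repr_one_ne_zero hq hp hpq
  rw [pointIdeal, Ideal.map_span, Ideal.span_le]
  rintro _ ⟨l, ⟨hl, hlp⟩, rfl⟩
  rw [SetLike.mem_coe, Ideal.mem_span_singleton, Polynomial.dvd_iff_isRoot, Polynomial.IsRoot,
    restrictToLine_linear hl]
  rw [← b.sum_repr p.rep, ← eval_coordChange, coordChange_linear b hl, Fin.sum_univ_three] at hlp
  simp only [map_add, map_mul, eval_C, eval_X, hb.mem_iff.mp (ProjLine.mem_points_iff.mp hp),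
    mul_zero, add_zero] at hlp
  simp only [Polynomial.eval_add, Polynomial.eval_mul, Polynomial.eval_C, Polynomial.eval_X,
    affineCoord]
  field_simp
  linear_combination hlp

lemma IsFrame.pow_dvd_restrictToLine (hb : IsFrame L b) (hq : b 0 = q.rep) (hp : p ∈ L.points)
    (hpq : p ≠ q) (hfk : f ∈ pointIdeal p ^ k) :
    (Polynomial.X - Polynomial.C (affineCoord b p)) ^ k ∣ restrictToLine b f := by
  rw [← Ideal.mem_span_singleton, ← Ideal.span_singleton_pow]
  refine Ideal.pow_right_mono (hb.map_restrictToLine_pointIdeal_le hq hp hpq) k ?_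
  rw [← Ideal.map_pow]
  exact Ideal.mem_map_of_mem _ hfk

end LocalConditions

section FatPoints

variable {K : Type} [Field K]

lemma finrank_le_of_map_le {V W : Type*} [AddCommGroup V] [Module K V] [AddCommGroup W]
    [Module K W] {A B : Submodule K V} {S : Submodule K W} [FiniteDimensional K A]
    [FiniteDimensional K B] [FiniteDimensional K S] (φ : V →ₗ[K] W) (hS : A.map φ ≤ S)
    (hB : A ⊓ φ.ker ≤ B) : finrank K A ≤ finrank K B + finrank K S := by
  rw [← (φ.domRestrict A).finrank_range_add_finrank_ker, LinearMap.range_domRestrict,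
    LinearMap.ker_domRestrict, ← Submodule.finrank_map_subtype_eq,
    Submodule.map_comap_subtype, add_comm]
  exact Nat.add_le_add (Submodule.finrank_mono hB) (Submodule.finrank_mono hS)

variable (K) in
lemma finrank_homogeneousSubmodule (n t : ℕ) :
    finrank K (homogeneousSubmodule (Fin n) K t) = (n + t - 1).choose t := by
  have h : homogeneousSubmodule (Fin n) K t = restrictSupport K
      ((Finset.univ : Finset (Fin n)).finsuppAntidiag t : Set (Fin n →₀ ℕ)) := by
    rw [homogeneousSubmodule_eq_finsupp_supported, restrictSupport]
    congr 1
    ext d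
    simp [Finset.mem_finsuppAntidiag, Finsupp.degree_eq_sum]
  rw [h, finrank_eq_nat_card_basis (basisRestrictSupport K _), Nat.card_coe_set_eq,
    Set.ncard_coe_finset, Finset.card_finsuppAntidiag_nat_eq_choose, Finset.card_univ,
    Fintype.card_fin]

lemma choose_two_succ (t : ℕ) : (t + 1).choose 2 = t.choose 2 + t := by
  rw [Nat.choose_succ_succ', Nat.choose_one_right, add_comm]

/-- The ideal of the scheme consisting of the points `p ∈ X` with multiplicities `μ p`. -/
noncomputable def multIdeal (X : Finset (P2 K)) (μ : P2 K → ℕ) : Ideal (MvPolynomial (Fin 3) K) :=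
  ⨅ p ∈ X, pointIdeal p ^ μ p

/-- The forms of degree `τ - 1` in `multIdeal X μ`. The shift makes room for the degree `-1`, in
which there are no forms. -/
noncomputable def fatPart (X : Finset (P2 K)) (μ : P2 K → ℕ) :
    ℕ → Submodule K (MvPolynomial (Fin 3) K)
  | 0 => ⊥
  | t + 1 => (multIdeal X μ).restrictScalars K ⊓ homogeneousSubmodule (Fin 3) K t

/-- The dimension of the space of forms of degree `τ - 1` in `multIdeal X μ`. -/
noncomputable def fatDim (X : Finset (P2 K)) (μ : P2 K → ℕ) (τ : ℕ) : ℕ :=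
  finrank K (fatPart X μ τ)

/-- The degree of the scheme consisting of the points `p ∈ X` with multiplicities `μ p`. -/
def fatDegree (X : Finset (P2 K)) (μ : P2 K → ℕ) : ℕ :=
  ∑ p ∈ X, (μ p + 1).choose 2

/-- The points of `X` on the line `L`. -/
noncomputable def pointsOn (X : Finset (P2 K)) (L : ProjLine K) : Finset (P2 K) :=
  {p ∈ X | p ∈ L.points}

/-- The multiplicities of the residual of a fat point scheme with respect to the line `L`. -/
noncomputable def residualMult (μ : P2 K → ℕ) (L : ProjLine K) (p : P2 K) : ℕ :=
  if p ∈ L.points then μ p - 1 else μ p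

variable {X : Finset (P2 K)} {μ : P2 K → ℕ} {L : ProjLine K} {p q : P2 K} {τ t : ℕ}
  {f l : MvPolynomial (Fin 3) K} {b : Basis (Fin 3) K (Fin 3 → K)}

lemma mem_pointsOn : p ∈ pointsOn X L ↔ p ∈ X ∧ p ∈ L.points := Finset.mem_filter

lemma mem_multIdeal : f ∈ multIdeal X μ ↔ ∀ p ∈ X, f ∈ pointIdeal p ^ μ p := by
  simp only [multIdeal, Submodule.mem_iInf]

lemma mem_fatPart_succ :
    f ∈ fatPart X μ (t + 1) ↔ (∀ p ∈ X, f ∈ pointIdeal p ^ μ p) ∧ f.IsHomogeneous t :=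
  and_congr_left' mem_multIdeal

instance : FiniteDimensional K (homogeneousSubmodule (Fin 3) K t) :=
  Module.Finite.iff_fg.mpr (homogeneousSubmodule_fg (Fin 3) K t)

instance : FiniteDimensional K (fatPart X μ τ) := by
  cases τ with
  | zero => exact inferInstanceAs (FiniteDimensional K (⊥ : Submodule K (MvPolynomial (Fin 3) K)))
  | succ t => exact Submodule.finiteDimensional_of_le inf_le_right

variable (X μ) in
lemma fatDim_zero : fatDim X μ 0 = 0 := finrank_bot K _

lemma fatDim_of_eq_zero (h : ∀ p ∈ X, μ p = 0) : fatDim X μ τ = (τ + 1).choose 2 := by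
  cases τ with
  | zero => exact fatDim_zero X μ
  | succ t =>
    have hpart : fatPart X μ (t + 1) = homogeneousSubmodule (Fin 3) K t := by
      ext f
      simp +contextual [mem_fatPart_succ, h]
    rw [fatDim, hpart, finrank_homogeneousSubmodule, show 3 + t - 1 = t + 2 by lia,
      Nat.choose_symm_add]

lemma fatDegree_of_eq_zero (h : ∀ p ∈ X, μ p = 0) : fatDegree X μ = 0 :=
  Finset.sum_eq_zero fun p hp ↦ by rw [h p hp]; rfl

lemma fatDim_le_fatDim_update_add (X : Finset (P2 K)) (μ : P2 K → ℕ) (p : P2 K) (τ : ℕ) :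
    fatDim X μ τ ≤ fatDim X (Function.update μ p (μ p + 1)) τ + (μ p + 1) := by
  cases τ with
  | zero => exact (fatDim_zero X μ).trans_le (Nat.zero_le _)
  | succ t =>
    obtain ⟨b, hb⟩ := exists_basis_zero_eq_rep p
    have h_finrank : finrank K (⊤ : Submodule K (Fin (μ p + 1) → K)) = μ p + 1 := by
      rw [finrank_top, finrank_fin_fun]
    refine (finrank_le_of_map_le (B := fatPart X (Function.update μ p (μ p + 1)) (t + 1))
      (leadingCoeffs b t (μ p)) le_top ?_).trans_eq (congrArg _ h_finrank)
    rintro f ⟨hf, hf0⟩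
    obtain ⟨hfX, hft⟩ := mem_fatPart_succ.mp hf
    refine mem_fatPart_succ.mpr ⟨fun q hq ↦ ?_, hft⟩
    by_cases hqp : q = p
    · subst hqp
      rw [Function.update_self]
      exact mem_pointIdeal_pow_succ hb hft (hfX q hq) hf0
    · rw [Function.update_of_ne hqp]
      exact hfX q hq

lemma fatDegree_update_add_one (hp : p ∈ X) :
    fatDegree X (Function.update μ p (μ p + 1)) = fatDegree X μ + (μ p + 1) := by
  rw [fatDegree, fatDegree, ← Finset.add_sum_erase X _ hp,
    ← Finset.add_sum_erase X (fun q ↦ (μ q + 1).choose 2) hp, Function.update_self,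
    choose_two_succ (μ p + 1), Finset.sum_congr rfl fun q hq ↦ by
      rw [Function.update_of_ne (Finset.ne_of_mem_erase hq)]]
  ring

lemma choose_two_le_fatDim_add_fatDegree (X : Finset (P2 K)) (μ : P2 K → ℕ) (τ : ℕ) :
    (τ + 1).choose 2 ≤ fatDim X μ τ + fatDegree X μ := by
  induction hn : ∑ p ∈ X, μ p generalizing μ with
  | zero => rw [fatDim_of_eq_zero (Finset.sum_eq_zero_iff.mp hn)]; exact Nat.le_add_right _ _
  | succ n ih =>
    obtain ⟨p, hp, hp0⟩ := Finset.exists_ne_zero_of_sum_ne_zero (hn.trans_ne n.succ_ne_zero)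
    obtain ⟨ν, rfl⟩ : ∃ ν, μ = Function.update ν p (ν p + 1) :=
      ⟨Function.update μ p (μ p - 1), by simp [Nat.sub_add_cancel (Nat.pos_of_ne_zero hp0)]⟩
    rw [Finset.sum_update_of_mem hp, ← Finset.erase_eq, add_right_comm,
      Finset.add_sum_erase X ν hp, add_left_inj] at hn
    have := fatDim_le_fatDim_update_add X ν p τ
    have := fatDegree_update_add_one (μ := ν) hp
    have := ih ν hn
    lia

lemma fatDegree_eq_residualMult_add (X : Finset (P2 K)) (μ : P2 K → ℕ) (L : ProjLine K) :
    fatDegree X μ = fatDegree X (residualMult μ L) + ∑ p ∈ pointsOn X L, μ p := by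
  rw [fatDegree, fatDegree, pointsOn, Finset.sum_filter, ← Finset.sum_add_distrib]
  refine Finset.sum_congr rfl fun p _ ↦ ?_
  unfold residualMult
  split_ifs
  · cases hμ : μ p with
    | zero => rfl
    | succ k => exact choose_two_succ _
  · rfl

lemma mul_mem_fatPart (hl : L.IsEquation l) (hf : f ∈ fatPart X (residualMult μ L) t) :
    l * f ∈ fatPart X μ (t + 1) := by
  cases t with
  | zero => rw [(Submodule.mem_bot K).mp hf, mul_zero]; exact zero_mem _
  | succ t =>
    obtain ⟨hfX, hft⟩ := mem_fatPart_succ.mp hf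
    refine mem_fatPart_succ.mpr ⟨fun p hp ↦ ?_, add_comm 1 t ▸ hl.isHomogeneous.mul hft⟩
    have hfp := hfX p hp
    by_cases hpL : p ∈ L.points
    · rw [residualMult, if_pos hpL] at hfp
      have := Ideal.mul_mem_mul (hl.mem_pointIdeal hpL) hfp
      rw [← pow_succ'] at this
      exact Ideal.pow_le_pow_right (by lia) this
    · rw [residualMult, if_neg hpL] at hfp
      exact Ideal.mul_mem_left _ _ hfp

lemma exists_mem_fatPart_residualMult (hl : L.IsEquation l) (hb : IsFrame L b)
    (hf : f ∈ fatPart X μ (t + 1)) (hfL : restrictToLine b f = 0) :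
    ∃ g ∈ fatPart X (residualMult μ L) t, l * g = f := by
  obtain ⟨hfX, hft⟩ := mem_fatPart_succ.mp hf
  cases t with
  | zero =>
    exact ⟨0, zero_mem _, by rw [mul_zero, eq_zero_of_restrictToLine_eq_zero hft hfL]⟩
  | succ t =>
    obtain ⟨g, hg, rfl⟩ := hl.exists_eq_mul hb hft hfL
    refine ⟨g, mem_fatPart_succ.mpr ⟨fun p hp ↦ ?_, hg⟩, rfl⟩
    unfold residualMult
    split_ifs with hpL
    · exact hl.mem_pow_of_mul_mem_of_mem hpL (hfX p hp)
    · exact hl.mem_pow_of_mul_mem_of_notMem hpL (hfX p hp)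

lemma prod_dvd_restrictToLine (hb : IsFrame L b) (hq : b 0 = q.rep) (hf : f ∈ fatPart X μ (t + 1)) :
    ∏ p ∈ (pointsOn X L).erase q, (Polynomial.X - Polynomial.C (affineCoord b p)) ^ μ p ∣
      restrictToLine b f := by
  have hmem {p} (hp : p ∈ (pointsOn X L).erase q) : p ∈ X ∧ p ∈ L.points ∧ p ≠ q :=
    have ⟨hpq, hpX⟩ := Finset.mem_erase.mp hp
    ⟨(mem_pointsOn.mp hpX).1, (mem_pointsOn.mp hpX).2, hpq⟩
  refine Finset.prod_dvd_of_coprime (fun p hp p' hp' hpp' ↦ ?_) fun p hp ↦ ?_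
  · refine IsCoprime.pow (Polynomial.isCoprime_X_sub_C_of_isUnit_sub ?_)
    rw [isUnit_iff_ne_zero, sub_ne_zero]
    exact fun h ↦ hpp' (hb.injOn_affineCoord hq (hmem hp).2 (hmem hp').2 h)
  · exact hb.pow_dvd_restrictToLine hq (hmem hp).2.1 (hmem hp).2.2
      ((mem_fatPart_succ.mp hf).1 p (hmem hp).1)

lemma natDegree_restrictToLine_add_le_of_mem_fatPart (hq : b 0 = q.rep)
    (hf : f ∈ fatPart X μ (t + 1)) (h0 : restrictToLine b f ≠ 0) (L : ProjLine K) :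
    (restrictToLine b f).natDegree + ∑ p ∈ pointsOn X L, μ p ≤
      t + ∑ p ∈ (pointsOn X L).erase q, μ p := by
  obtain ⟨hfX, hft⟩ := mem_fatPart_succ.mp hf
  by_cases hqX : q ∈ pointsOn X L
  · have := natDegree_restrictToLine_add_le hq hft (hfX q (mem_pointsOn.mp hqX).1) h0
    have := Finset.add_sum_erase _ μ hqX
    lia
  · have := natDegree_restrictToLine_add_le hq hft (k := 0) (by simp) h0
    rw [Finset.erase_eq_of_notMem hqX]
    lia

-- Restricted to `L`, a form in the ideal vanishes to order `μ p` at each `p ∈ L`, including the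
-- point at infinity of the affine coordinate.
lemma map_restrictToLine_fatPart_le (hb : IsFrame L b) (hq : b 0 = q.rep) :
    (fatPart X μ (t + 1)).map (restrictToLine b).toLinearMap ≤
      (Polynomial.degreeLT K (t + 1 - ∑ p ∈ pointsOn X L, μ p)).map (LinearMap.mulLeft K
        (∏ p ∈ (pointsOn X L).erase q, (Polynomial.X - Polynomial.C (affineCoord b p)) ^ μ p)) := by
  rintro _ ⟨f, hf, rfl⟩
  set G := ∏ p ∈ (pointsOn X L).erase q, (Polynomial.X - Polynomial.C (affineCoord b p)) ^ μ p
    with hG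
  have hG_monic : G.Monic :=
    Polynomial.monic_prod_of_monic _ _ fun p _ ↦ (Polynomial.monic_X_sub_C _).pow _
  have hG_degree : G.natDegree = ∑ p ∈ (pointsOn X L).erase q, μ p := by
    rw [hG, Polynomial.natDegree_prod_of_monic _ _ fun p _ ↦ (Polynomial.monic_X_sub_C _).pow _]
    simp only [Polynomial.natDegree_pow, Polynomial.natDegree_X_sub_C, mul_one]
  obtain ⟨g, hg⟩ := prod_dvd_restrictToLine hb hq hf
  refine ⟨g, ?_, hg.symm⟩
  by_cases hg0 : g = 0
  · rw [hg0]
    exact zero_mem _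
  have hle := natDegree_restrictToLine_add_le_of_mem_fatPart hq hf
    (by rw [hg]; exact mul_ne_zero hG_monic.ne_zero hg0) L
  rw [hg, hG_monic.natDegree_mul' hg0, hG_degree] at hle
  rw [SetLike.mem_coe, Polynomial.mem_degreeLT, Polynomial.degree_eq_natDegree hg0, Nat.cast_lt]
  lia

lemma finrank_degreeLT (n : ℕ) : finrank K (Polynomial.degreeLT K n) = n := by
  rw [(Polynomial.degreeLTEquiv K n).finrank_eq, finrank_fin_fun]

instance (n : ℕ) : FiniteDimensional K (Polynomial.degreeLT K n) :=
  Module.Finite.equiv (Polynomial.degreeLTEquiv K n).symm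

variable (X μ L t)

lemma fatDim_residualMult_le : fatDim X (residualMult μ L) t ≤ fatDim X μ (t + 1) := by
  obtain ⟨l, hl⟩ := L.exists_isEquation
  have hinj : Function.Injective (LinearMap.mulLeft K l) := mul_right_injective₀ hl.ne_zero
  rw [fatDim, (Submodule.equivMapOfInjective _ hinj _).finrank_eq]
  refine Submodule.finrank_mono ?_
  rintro _ ⟨f, hf, rfl⟩
  exact mul_mem_fatPart hl hf

lemma fatDim_succ_le : fatDim X μ (t + 1) ≤
    fatDim X (residualMult μ L) t + (t + 1 - ∑ p ∈ pointsOn X L, μ p) := by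
  obtain ⟨l, hl⟩ := L.exists_isEquation
  obtain ⟨q, hqL⟩ := L.points_nonempty
  obtain ⟨b, hb, hq⟩ := exists_isFrame_of_mem hqL
  refine (finrank_le_of_map_le (restrictToLine b).toLinearMap (map_restrictToLine_fatPart_le hb hq)
    (B := (fatPart X (residualMult μ L) t).map (LinearMap.mulLeft K l)) ?_).trans
    (Nat.add_le_add (Submodule.finrank_map_le _ _)
      ((Submodule.finrank_map_le _ _).trans_eq (finrank_degreeLT _)))
  exact fun f ⟨hf, hf0⟩ ↦ exists_mem_fatPart_residualMult hl hb hf hf0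

end FatPoints

section Independence

variable {K ι : Type} [Field K]

/-- The number of lines `M i`, `i ∈ S`, through the point `p`. -/
noncomputable def incidence (M : ι → ProjLine K) (S : Finset ι) (p : P2 K) : ℕ :=
  Finset.card {i ∈ S | p ∈ (M i).points}

/-- The schemes of fat points on `X` with multiplicities at most `β` impose independent conditions
on forms of every degree at least `τ - 1`. A negative value of `β` counts as multiplicity `0`. -/
def IndependentFrom (X : Finset (P2 K)) (β : P2 K → ℤ) (τ : ℤ) : Prop :=
  ∀ μ : P2 K → ℕ, (∀ p ∈ X, (μ p : ℤ) ≤ max (β p) 0) → ∀ t : ℕ, τ ≤ t →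
    fatDim X μ t + fatDegree X μ = (t + 1).choose 2

variable {X T : Finset (P2 K)} {L L' : ProjLine K} {p : P2 K} {M : ι → ProjLine K}
  {S S' : Finset ι} {β γ : P2 K → ℤ} {τ σ : ℤ} {i : ι}

lemma incidence_insert [DecidableEq ι] (hi : i ∉ S) : incidence M (insert i S) p =
    (if p ∈ (M i).points then 1 else 0) + incidence M S p := by
  rw [incidence, incidence, Finset.card_filter, Finset.sum_insert hi, ← Finset.card_filter]

lemma sum_incidence (T : Finset (P2 K)) (M : ι → ProjLine K) (S : Finset ι) :
    ∑ p ∈ T, incidence M S p = ∑ i ∈ S, (pointsOn T (M i)).card := by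
  simp only [incidence, pointsOn, Finset.card_filter]
  exact Finset.sum_comm

lemma incidence_filter_add_filter_not (P : ι → Prop) [DecidablePred P] (M : ι → ProjLine K)
    (S : Finset ι) (p : P2 K) :
    incidence M {i ∈ S | P i} p + incidence M {i ∈ S | ¬P i} p = incidence M S p := by
  rw [incidence, incidence, Finset.filter_comm, Finset.filter_comm (¬P ·),
    Finset.card_filter_add_card_filter_not, incidence]

lemma incidence_mono (hST : S ⊆ S') (M : ι → ProjLine K) (p : P2 K) :
    incidence M S p ≤ incidence M S' p :=
  Finset.card_le_card (Finset.filter_subset_filter _ hST)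

lemma incidence_pos (hi : i ∈ S) (hp : p ∈ (M i).points) : 0 < incidence M S p :=
  Finset.card_pos.mpr ⟨i, Finset.mem_filter.mpr ⟨hi, hp⟩⟩

lemma two_le_incidence {j : ι} (hij : i ≠ j) (hi : i ∈ S) (hj : j ∈ S)
    (hpi : p ∈ (M i).points) (hpj : p ∈ (M j).points) : 2 ≤ incidence M S p :=
  Finset.one_lt_card.mpr
    ⟨i, Finset.mem_filter.mpr ⟨hi, hpi⟩, j, Finset.mem_filter.mpr ⟨hj, hpj⟩, hij⟩

lemma incidence_le_one
    (h : ∀ i ∈ S, ∀ j ∈ S, p ∈ (M i).points → p ∈ (M j).points → i = j) :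
    incidence M S p ≤ 1 :=
  Finset.card_le_one.mpr fun i hi j hj ↦ by
    rw [Finset.mem_filter] at hi hj
    exact h i hi.1 j hj.1 hi.2 hj.2

lemma card_le_sum_incidence (h : ∀ i ∈ S, ∃ p ∈ T, p ∈ (M i).points) :
    S.card ≤ ∑ p ∈ T, incidence M S p := by
  rw [sum_incidence, Finset.card_eq_sum_ones]
  refine Finset.sum_le_sum fun i hi ↦ Finset.card_pos.mpr ?_
  obtain ⟨p, hp, hpi⟩ := h i hi
  exact ⟨p, mem_pointsOn.mpr ⟨hp, hpi⟩⟩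

@[simp]
lemma incidence_empty (M : ι → ProjLine K) (p : P2 K) : incidence M ∅ p = 0 := rfl

lemma incidence_union [DecidableEq ι] (h : Disjoint S S') (M : ι → ProjLine K) (p : P2 K) :
    incidence M (S ∪ S') p = incidence M S p + incidence M S' p := by
  rw [incidence, Finset.filter_union,
    Finset.card_union_of_disjoint (Finset.disjoint_filter_filter h), incidence, incidence]

lemma incidence_image (hM : Function.Injective M) (S : Finset ι) (p : P2 K) :
    incidence id (S.image M) p = incidence M S p := by
  rw [incidence, Finset.filter_image, Finset.card_image_of_injective _ hM]
  rfl

lemma card_pointsOn_le_one (hL : L ≠ L') (hT : ∀ p ∈ T, p ∈ L.points) :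
    (pointsOn T L').card ≤ 1 := by
  refine Finset.card_le_one.mpr fun p hp q hq ↦ by_contra fun hpq ↦ hL ?_
  rw [mem_pointsOn] at hp hq
  exact ProjLine.eq_of_mem_of_mem hpq (hT p hp.1) (hT q hq.1) hp.2 hq.2

lemma IndependentFrom.mono (h : IndependentFrom X β τ) (hβ : ∀ p ∈ X, γ p ≤ β p) (hτ : τ ≤ σ) :
    IndependentFrom X γ σ := fun μ hμ t ht ↦
  h μ (fun p hp ↦ (hμ p hp).trans (max_le_max_right 0 (hβ p hp))) t (hτ.trans ht)

lemma independentFrom_of_nonpos (τ : ℤ) (h : ∀ p ∈ X, β p ≤ 0) : IndependentFrom X β τ := by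
  intro μ hμ t _
  have hμ0 : ∀ p ∈ X, μ p = 0 := fun p hp ↦ by
    have := hμ p hp
    rw [max_eq_right (h p hp)] at this
    lia
  rw [fatDim_of_eq_zero hμ0, fatDegree_of_eq_zero hμ0, add_zero]

-- The residual sequence of `L` bounds the dimension above; counting conditions bounds it below.
lemma IndependentFrom.of_residual (L : ProjLine K) (hL : ∑ p ∈ pointsOn X L, max 0 (β p) ≤ τ)
    (h : IndependentFrom X (fun p ↦ β p - if p ∈ L.points then 1 else 0) (τ - 1)) :
    IndependentFrom X β τ := by
  intro μ hμ t ht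
  have hμL : ∑ p ∈ pointsOn X L, μ p ≤ t := by
    have : ∑ p ∈ pointsOn X L, (μ p : ℤ) ≤ ∑ p ∈ pointsOn X L, max 0 (β p) :=
      Finset.sum_le_sum fun p hp ↦ max_comm (β p) 0 ▸ hμ p (mem_pointsOn.mp hp).1
    exact_mod_cast (this.trans hL).trans ht
  cases t with
  | zero =>
    refine h μ (fun p hp ↦ ?_) 0 (by lia)
    beta_reduce
    split_ifs with hpL
    · have hp0 := Finset.sum_eq_zero_iff.mp (Nat.le_zero.mp hμL) p (mem_pointsOn.mpr ⟨hp, hpL⟩)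
      simp [hp0]
    · simpa using hμ p hp
  | succ t =>
    have h_residual := h (residualMult μ L) (fun p hp ↦ by
      have := hμ p hp
      unfold residualMult
      split_ifs <;> lia) t (by lia)
    have := fatDim_succ_le X μ L t
    have := choose_two_le_fatDim_add_fatDegree X μ (t + 1)
    have := fatDegree_eq_residualMult_add X μ L
    have := choose_two_succ (t + 1)
    lia

lemma IndependentFrom.of_residual_lines [LinearOrder ι] (M : ι → ProjLine K) (S : Finset ι)
    (hS : ∀ i ∈ S, ∑ p ∈ pointsOn X (M i), max 0 (β p - incidence M {j ∈ S | i < j} p) ≤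
      τ - Finset.card {j ∈ S | i < j})
    (h : IndependentFrom X (fun p ↦ β p - incidence M S p) (τ - S.card)) :
    IndependentFrom X β τ := by
  induction S using Finset.induction_on_max generalizing β τ with
  | empty => simpa [incidence] using h
  | insert a S ha ih =>
    have haS : a ∉ S := fun h ↦ lt_irrefl _ (ha a h)
    refine .of_residual (M a) ?_ (ih (fun i hi ↦ ?_) ?_)
    · have h_empty : {j ∈ insert a S | a < j} = ∅ := Finset.filter_eq_empty_iff.mpr fun j hj ↦
        (Finset.mem_insert.mp hj).elim (fun h ↦ h ▸ lt_irrefl a) fun hj ↦ (ha j hj).not_gt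
      simpa [h_empty, incidence] using hS a (Finset.mem_insert_self a S)
    · have hi' := hS i (Finset.mem_insert_of_mem hi)
      have hai : a ∉ {j ∈ S | i < j} := fun h ↦ haS (Finset.mem_filter.mp h).1
      rw [Finset.filter_insert, if_pos (ha i hi), Finset.card_insert_of_notMem hai] at hi'
      have h_sub (p : P2 K) : β p - (if p ∈ (M a).points then 1 else 0) -
          incidence M {j ∈ S | i < j} p = β p - incidence M (insert a {j ∈ S | i < j}) p := by
        rw [incidence_insert hai]
        push_cast
        ring
      simp only [h_sub]
      push_cast at hi'
      lia
    · rw [Finset.card_insert_of_notMem haS] at h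
      refine h.mono (fun p _ ↦ ?_) (by push_cast; lia)
      rw [incidence_insert haS]
      push_cast
      lia

end Independence

section FullLines

variable {K : Type} [Field K] {X : Finset (P2 K)} {F : Finset (ProjLine K)} {m D t : ℕ}

lemma residualMult_sub_incidence {L : ProjLine K} (hL : L ∉ F) : residualMult
    (fun p ↦ m - incidence id F p) L = fun p ↦ m - incidence id (insert L F) p := by
  ext p
  rw [residualMult, incidence_insert hL, id_eq]
  split_ifs <;> lia

lemma mul_card_le_sum_pointsOn {L : ProjLine K} (hL : L ∉ F) (X : Finset (P2 K)) (m : ℕ) :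
    m * (pointsOn X L).card ≤ ∑ p ∈ pointsOn X L, (m - incidence id F p) + F.card := by
  have h_incidence : ∑ p ∈ pointsOn X L, incidence id F p ≤ F.card := by
    rw [sum_incidence, Finset.card_eq_sum_ones]
    exact Finset.sum_le_sum fun L' hL' ↦ card_pointsOn_le_one (ne_of_mem_of_not_mem hL' hL).symm
      fun p hp ↦ (mem_pointsOn.mp hp).2
  have h_sum : ∑ _p ∈ pointsOn X L, m ≤
      ∑ p ∈ pointsOn X L, ((m - incidence id F p) + incidence id F p) :=
    Finset.sum_le_sum fun p _ ↦ le_tsub_add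
  rw [Finset.sum_const, smul_eq_mul, mul_comm, Finset.sum_add_distrib] at h_sum
  lia

-- By Bézout, every line with `D` points of `X` is a component of each curve in question.
lemma fatDim_const_add_card (hF : ∀ L ∈ F, (pointsOn X L).card = D) (ht : t + F.card ≤ m * D) :
    fatDim X (fun _ ↦ m) (t + F.card) = fatDim X (fun p ↦ m - incidence id F p) t := by
  induction F using Finset.induction_on generalizing t with
  | empty => simp [incidence]
  | insert L F hL ih =>
    rw [Finset.card_insert_of_notMem hL] at ht ⊢
    rw [Finset.forall_mem_insert] at hF
    rw [← add_assoc, add_right_comm, ih hF.2 (by lia), ← residualMult_sub_incidence hL]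
    refine le_antisymm ?_ (fatDim_residualMult_le X _ L t)
    have := fatDim_succ_le X (fun p ↦ m - incidence id F p) L t
    have := mul_card_le_sum_pointsOn hL X m
    rw [hF.1] at this
    lia

lemma hilb_fatIdeal (X : Finset (P2 K)) (m t : ℕ) :
    (hilb (fatIdeal (X : Set (P2 K)) m) t : ℤ) =
      (t + 2).choose 2 - fatDim X (fun _ ↦ m) (t + 1) := by
  have hle : fatDim X (fun _ ↦ m) (t + 1) ≤ finrank K (homogeneousSubmodule (Fin 3) K t) :=
    Submodule.finrank_mono inf_le_right
  have hhom : finrank K (homogeneousSubmodule (Fin 3) K t) = (t + 2).choose 2 := by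
    rw [finrank_homogeneousSubmodule, show 3 + t - 1 = t + 2 by lia, Nat.choose_symm_add]
  rw [← hhom, ← Nat.cast_sub hle]
  rfl

lemma deltaHilb_fatIdeal (X : Finset (P2 K)) (m t : ℕ) :
    deltaHilb (fatIdeal (X : Set (P2 K)) m) (t + 1) =
      t + 2 + fatDim X (fun _ ↦ m) (t + 1) - fatDim X (fun _ ↦ m) (t + 2) := by
  have h_choose : (t + 1 + 2).choose 2 = (t + 2).choose 2 + (t + 2) := choose_two_succ (t + 2)
  have h_succ := hilb_fatIdeal X m (t + 1)
  rw [deltaHilb, hilbZ, hilbZ, if_neg (by lia), if_neg (by lia), add_sub_cancel_right,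
    Int.toNat_natCast, Int.toNat_natCast_add_one, h_succ, hilb_fatIdeal, h_choose]
  push_cast
  ring

lemma ncard_setOf_ncard_inter_eq (hF : ∀ L, L ∈ F ↔ (pointsOn X L).card = D) :
    {L : ProjLine K | ((X : Set (P2 K)) ∩ L.points).ncard = D}.ncard = F.card := by
  rw [← Set.ncard_coe_finset]
  congr 1
  ext L
  have : (X : Set (P2 K)) ∩ L.points = pointsOn X L := by
    ext p
    simp [mem_pointsOn]
  rw [Set.mem_ofPred_eq, this, Set.ncard_coe_finset, ← hF, Finset.mem_coe]

lemma fatDim_const_add_fatDegree (hF : ∀ L ∈ F, (pointsOn X L).card = D)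
    (h : IndependentFrom X (fun p ↦ m - incidence id F p) (m * D - 1 - F.card))
    (ht : t + F.card ≤ m * D) (ht' : m * D ≤ t + F.card + 1) :
    fatDim X (fun _ ↦ m) (t + F.card) + fatDegree X (fun p ↦ m - incidence id F p) =
      (t + 1).choose 2 := by
  rw [fatDim_const_add_card hF ht]
  exact h _ (fun p _ ↦ by lia) t (by zify at ht'; lia)

lemma deltaHilb_eq_ncard_of_independentFrom (hF : ∀ L, L ∈ F ↔ (pointsOn X L).card = D)
    (hcard : F.card + 1 ≤ m * D) (hmD : 2 ≤ m * D)
    (h : IndependentFrom X (fun p ↦ m - incidence id F p) (m * D - 1 - F.card)) :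
    deltaHilb (fatIdeal (X : Set (P2 K)) m) (m * D - 1) =
      ({L : ProjLine K | ((X : Set (P2 K)) ∩ L.points).ncard = D}.ncard : ℤ) := by
  obtain ⟨t, ht⟩ : ∃ t, m * D = t + 2 := ⟨m * D - 2, by lia⟩
  obtain ⟨u, hu⟩ : ∃ u, t + 1 = u + F.card := ⟨t + 1 - F.card, by lia⟩
  have hF' : ∀ L ∈ F, (pointsOn X L).card = D := fun L ↦ (hF L).mp
  have h_deg := fatDim_const_add_fatDegree hF' h (t := u) (by lia) (by lia)
  have h_deg' := fatDim_const_add_fatDegree hF' h (t := u + 1) (by lia) (by lia)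
  rw [← hu] at h_deg
  rw [add_right_comm, ← hu, choose_two_succ (u + 1)] at h_deg'
  have hmD' : (m : ℤ) * D - 1 = t + 1 := by
    rw [← Nat.cast_mul, ht]
    push_cast
    ring
  rw [ncard_setOf_ncard_inter_eq hF, hmD', deltaHilb_fatIdeal]
  zify at h_deg h_deg' hu
  linarith

end FullLines

section Configurations

variable {K : Type} [Field K] {n : ℕ}

lemma card_filter_lt_add {J : Finset (Fin (n + 1))} {i : Fin (n + 1)}
    (hJ : IsUpperSet (J : Set (Fin (n + 1)))) (hi : i ∈ J) :
    Finset.card {j ∈ J | i < j} + i = n := by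
  have h_Ioi : {j ∈ J | i < j} = Finset.Ioi i := by
    ext j
    rw [Finset.mem_filter, Finset.mem_Ioi, and_iff_right_iff_imp]
    exact fun hij ↦ hJ hij.le hi
  rw [h_Ioi, Fin.card_Ioi]
  lia

/-- A `k`-configuration of type `((Y 0).card, …, (Y n).card)` on the lines `Ls 0, …, Ls n`, in
terms of finite sets of points; `D` is the largest entry of its type. -/
structure FinsetKConfig (X : Finset (P2 K)) (Y : Fin (n + 1) → Finset (P2 K))
    (Ls : Fin (n + 1) → ProjLine K) (D : ℕ) : Prop where
  mem_iff : ∀ p, p ∈ X ↔ ∃ i, p ∈ Y i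
  mem_points : ∀ i, ∀ p ∈ Y i, p ∈ (Ls i).points
  notMem_points : ∀ i j, j < i → ∀ p ∈ Y j, p ∉ (Ls i).points
  one_le : ∀ i, 1 ≤ (Y i).card
  strictMono : StrictMono fun i ↦ (Y i).card
  injective : Function.Injective Ls
  card_last : (Y (Fin.last n)).card = D

namespace FinsetKConfig

variable {X : Finset (P2 K)} {Y : Fin (n + 1) → Finset (P2 K)} {Ls : Fin (n + 1) → ProjLine K}
  {D : ℕ} {L : ProjLine K} {i j : Fin (n + 1)} {p : P2 K}

lemma subset (h : FinsetKConfig X Y Ls D) (i : Fin (n + 1)) : Y i ⊆ X :=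
  fun p hp ↦ (h.mem_iff p).mpr ⟨i, hp⟩

lemma subset_pointsOn (h : FinsetKConfig X Y Ls D) (i : Fin (n + 1)) : Y i ⊆ pointsOn X (Ls i) :=
  fun p hp ↦ mem_pointsOn.mpr ⟨h.subset i hp, h.mem_points i p hp⟩

lemma le_of_mem_points (h : FinsetKConfig X Y Ls D) (hp : p ∈ Y j) (hpi : p ∈ (Ls i).points) :
    i ≤ j :=
  not_lt.mp fun hji ↦ h.notMem_points i j hji p hp hpi

lemma mem_pointsOn_sdiff_iff (h : FinsetKConfig X Y Ls D) :
    p ∈ pointsOn X (Ls i) \ Y i ↔ p ∈ (Ls i).points ∧ ∃ j, i < j ∧ p ∈ Y j := by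
  rw [Finset.mem_sdiff, mem_pointsOn]
  constructor
  · rintro ⟨⟨hpX, hpi⟩, hpY⟩
    obtain ⟨j, hpj⟩ := (h.mem_iff p).mp hpX
    exact ⟨hpi, j, (h.le_of_mem_points hpj hpi).lt_of_ne fun e ↦ hpY (e ▸ hpj), hpj⟩
  · rintro ⟨hpi, j, hij, hpj⟩
    exact ⟨⟨h.subset j hpj, hpi⟩, fun hpY ↦ h.notMem_points j i hij p hpY (h.mem_points j p hpj)⟩

lemma card_pointsOn (h : FinsetKConfig X Y Ls D) (i : Fin (n + 1)) :
    (pointsOn X (Ls i)).card = (Y i).card + (pointsOn X (Ls i) \ Y i).card := by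
  rw [add_comm, Finset.card_sdiff_add_card_eq_card (h.subset_pointsOn i)]

lemma card_add_le (h : FinsetKConfig X Y Ls D) (i : Fin (n + 1)) : (Y i).card + n ≤ D + i := by
  induction i using Fin.reverseInduction with
  | last => rw [h.card_last, Fin.val_last]
  | cast i ih =>
    have h_lt : (Y i.castSucc).card < (Y i.succ).card := h.strictMono i.castSucc_lt_succ
    rw [Fin.val_succ] at ih
    rw [Fin.val_castSucc]
    lia

lemma card_le_of_exists_mem (h : FinsetKConfig X Y Ls D) (T : Finset (P2 K))
    (J : Finset (Fin (n + 1)))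
    (hT : ∀ p ∈ T, p ∈ L.points ∧ ∃ j ∈ J, Ls j ≠ L ∧ p ∈ Y j) : T.card ≤ J.card := by
  choose! hTL j hj using hT
  refine Finset.card_le_card_of_injOn j (fun p hp ↦ (hj p hp).1) fun p hp q hq hpq ↦ ?_
  by_contra hne
  refine (hj p hp).2.1 (ProjLine.eq_of_mem_of_mem hne ?_ ?_ (hTL p hp) (hTL q hq))
  · exact h.mem_points _ p (hj p hp).2.2
  · exact h.mem_points _ q (hpq ▸ (hj q hq).2.2)

lemma card_sdiff_add_le (h : FinsetKConfig X Y Ls D) (i : Fin (n + 1)) :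
    (pointsOn X (Ls i) \ Y i).card + i ≤ n := by
  have := h.card_le_of_exists_mem (L := Ls i) (pointsOn X (Ls i) \ Y i) (Finset.Ioi i) fun p hp ↦ by
    obtain ⟨hpi, j, hij, hpj⟩ := h.mem_pointsOn_sdiff_iff.mp hp
    exact ⟨hpi, j, Finset.mem_Ioi.mpr hij, h.injective.ne hij.ne', hpj⟩
  rw [Fin.card_Ioi] at this
  lia

lemma card_sdiff_add_lt (h : FinsetKConfig X Y Ls D) (hij : i < j)
    (hj : ∀ p ∈ Y j, p ∉ (Ls i).points) : (pointsOn X (Ls i) \ Y i).card + i < n := by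
  have := h.card_le_of_exists_mem (L := Ls i) (pointsOn X (Ls i) \ Y i) ((Finset.Ioi i).erase j)
    fun p hp ↦ by
      obtain ⟨hpi, k, hik, hpk⟩ := h.mem_pointsOn_sdiff_iff.mp hp
      exact ⟨hpi, k, Finset.mem_erase.mpr ⟨fun e ↦ hj p (e ▸ hpk) hpi, Finset.mem_Ioi.mpr hik⟩,
        h.injective.ne hik.ne', hpk⟩
  rw [Finset.card_erase_of_mem (Finset.mem_Ioi.mpr hij), Fin.card_Ioi] at this
  lia

lemma exists_mem_of_card_pointsOn_eq (h : FinsetKConfig X Y Ls D)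
    (hi : (pointsOn X (Ls i)).card = D) (hij : i < j) : ∃ p ∈ Y j, p ∈ (Ls i).points := by
  by_contra! hj
  have := h.card_sdiff_add_lt hij hj
  have := h.card_add_le i
  have := h.card_pointsOn i
  lia

lemma lt_largest (h : FinsetKConfig X Y Ls D) : n < D := by
  have h_add := h.card_add_le 0
  rw [Fin.val_zero] at h_add
  have := h.one_le 0
  lia

lemma card_pointsOn_le_of_forall_ne (h : FinsetKConfig X Y Ls D) (hL : ∀ i, Ls i ≠ L) :
    (pointsOn X L).card ≤ n + 1 := by
  have := h.card_le_of_exists_mem (L := L) (pointsOn X L) Finset.univ fun p hp ↦ by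
    obtain ⟨hpX, hpL⟩ := mem_pointsOn.mp hp
    obtain ⟨j, hpj⟩ := (h.mem_iff p).mp hpX
    exact ⟨hpL, j, Finset.mem_univ j, hL j, hpj⟩
  rwa [Finset.card_fin] at this

lemma exists_mem_of_forall_ne (h : FinsetKConfig X Y Ls D) (hL : ∀ i, Ls i ≠ L)
    (hc : (pointsOn X L).card = n + 1) (i : Fin (n + 1)) : ∃ p ∈ Y i, p ∈ L.points := by
  by_contra! hi
  have := h.card_le_of_exists_mem (L := L) (pointsOn X L) (Finset.univ.erase i) fun p hp ↦ by
    obtain ⟨hpX, hpL⟩ := mem_pointsOn.mp hp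
    obtain ⟨j, hpj⟩ := (h.mem_iff p).mp hpX
    exact ⟨hpL, j, Finset.mem_erase.mpr ⟨fun e ↦ hi p (e ▸ hpj) hpL, Finset.mem_univ j⟩, hL j, hpj⟩
  rw [Finset.card_erase_of_mem (Finset.mem_univ i), Finset.card_fin] at this
  lia

lemma card_pointsOn_le (h : FinsetKConfig X Y Ls D) (L : ProjLine K) :
    (pointsOn X L).card ≤ D := by
  by_cases hL : ∀ i, Ls i ≠ L
  · exact (h.card_pointsOn_le_of_forall_ne hL).trans h.lt_largest
  · push Not at hL
    obtain ⟨i, rfl⟩ := hL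
    have := h.card_pointsOn i
    have := h.card_add_le i
    have := h.card_sdiff_add_le i
    lia

lemma sum_pointsOn_le (h : FinsetKConfig X Y Ls D) (i : Fin (n + 1)) {g c e : P2 K → ℤ} {a b : ℤ}
    (hY : ∀ p ∈ Y i, g p ≤ a - c p) (hE : ∀ p ∈ pointsOn X (Ls i) \ Y i, g p ≤ b - e p) :
    ∑ p ∈ pointsOn X (Ls i), g p ≤ (Y i).card * a - ∑ p ∈ Y i, c p +
      ((pointsOn X (Ls i) \ Y i).card * b - ∑ p ∈ pointsOn X (Ls i) \ Y i, e p) := by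
  rw [← Finset.sum_sdiff (h.subset_pointsOn i), add_comm]
  refine (add_le_add (Finset.sum_le_sum hY) (Finset.sum_le_sum hE)).trans_eq ?_
  simp only [Finset.sum_sub_distrib, Finset.sum_const, nsmul_eq_mul]

end FinsetKConfig

end Configurations

section FullLinesOfConfigurations

namespace FinsetKConfig

variable {K : Type} [Field K] {n : ℕ} {X : Finset (P2 K)} {Y : Fin (n + 1) → Finset (P2 K)}
  {Ls : Fin (n + 1) → ProjLine K} {D m : ℕ} {i j k : Fin (n + 1)} {p : P2 K}
  {J : Finset (Fin (n + 1))} {A : Finset (ProjLine K)}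

lemma eq_of_card_pointsOn_eq (h : FinsetKConfig X Y Ls D) (hj : (pointsOn X (Ls j)).card = D)
    (hk : (pointsOn X (Ls k)).card = D) (hji : j < i) (hki : k < i) (hp : p ∈ Y i)
    (hpj : p ∈ (Ls j).points) (hpk : p ∈ (Ls k).points) : j = k := by
  wlog hjk : j < k generalizing j k
  · by_contra hne
    exact hne (this hk hj hki hji hpk hpj ((not_lt.mp hjk).lt_of_ne' hne)).symm
  obtain ⟨q, hq, hqj⟩ := h.exists_mem_of_card_pointsOn_eq hj hjk
  by_cases hpq : p = q
  · exact absurd (h.mem_points i p hp) (h.notMem_points i k hki p (hpq ▸ hq))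
  · exact h.injective (ProjLine.eq_of_mem_of_mem hpq hpj hqj hpk (h.mem_points k q hq))

lemma card_full_add_card_nonfull {P : Fin (n + 1) → Prop} [DecidablePred P]
    (hJ : IsUpperSet (J : Set (Fin (n + 1)))) (hi : i ∈ J) (hPi : ¬P i) :
    Finset.card {j ∈ J | P j} + Finset.card {j ∈ {j ∈ J | ¬P j} | i < j} + i =
      Finset.card {j ∈ {j ∈ J | P j} | j < i} + n := by
  have h_lt := Finset.card_filter_add_card_filter_not (s := {j ∈ J | i < j}) P
  have h_full := Finset.card_filter_add_card_filter_not (s := {j ∈ J | P j}) (i < ·)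
  have h_not : ({j ∈ {j ∈ J | P j} | ¬i < j} : Finset _) = {j ∈ {j ∈ J | P j} | j < i} :=
    Finset.filter_congr fun j hj ↦ not_lt.trans <| le_iff_lt_or_eq.trans <|
      or_iff_left fun e ↦ hPi (e ▸ (Finset.mem_filter.mp hj).2)
  rw [h_not] at h_full
  rw [Finset.filter_comm, Finset.filter_comm (i < ·)] at h_lt
  have := card_filter_lt_add hJ hi
  lia

lemma sum_pointsOn_nonfull_le (h : FinsetKConfig X Y Ls D) (hm : 2 ≤ m)
    (hJ : IsUpperSet (J : Set (Fin (n + 1))))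
    (hA : ∀ i ∈ J, ∀ p ∈ Y i, incidence id A p ≤ 1)
    (hi : i ∈ J) :
    ∑ p ∈ pointsOn X (Ls i), max 0 ((m : ℤ) -
        incidence Ls {j ∈ J | (pointsOn X (Ls j)).card = D} p - incidence id A p -
        incidence Ls {j ∈ {j ∈ J | (pointsOn X (Ls j)).card ≠ D} | i < j} p) ≤
      (Y i).card * m - ∑ p ∈ Y i,
        (incidence Ls {j ∈ {j ∈ J | (pointsOn X (Ls j)).card = D} | j < i} p + incidence id A p : ℤ)
      + (pointsOn X (Ls i) \ Y i).card * (m - 1) := by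
  refine (h.sum_pointsOn_le i (a := m) (b := m - 1) (e := 0)
    (c := fun p ↦ incidence Ls {j ∈ {j ∈ J | (pointsOn X (Ls j)).card = D} | j < i} p +
      incidence id A p) (fun p hp ↦ max_le ?_ ?_) (fun p hp ↦ max_le ?_ ?_)).trans_eq (by simp)
  · have h_le_one : incidence Ls {j ∈ {j ∈ J | (pointsOn X (Ls j)).card = D} | j < i} p ≤ 1 :=
      incidence_le_one fun j hj k hk ↦ by
        simp only [Finset.mem_filter] at hj hk
        exact h.eq_of_card_pointsOn_eq hj.1.2 hk.1.2 hj.2 hk.2 hp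
    have := hA i hi p hp
    lia
  · have := incidence_mono (Finset.filter_subset (· < i) {j ∈ J | (pointsOn X (Ls j)).card = D})
      Ls p
    lia
  · simp only [Pi.zero_apply]
    lia
  · obtain ⟨-, j, hij, hpj⟩ := h.mem_pointsOn_sdiff_iff.mp hp
    have hjJ := hJ hij.le hi
    simp only [Pi.zero_apply]
    by_cases hj : (pointsOn X (Ls j)).card = D
    · have hj' : j ∈ ({j ∈ J | (pointsOn X (Ls j)).card = D} : Finset _) :=
        Finset.mem_filter.mpr ⟨hjJ, hj⟩
      have := incidence_pos hj' (h.mem_points j p hpj)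
      lia
    · have hj' : j ∈ ({j ∈ {j ∈ J | (pointsOn X (Ls j)).card ≠ D} | i < j} : Finset _) :=
        Finset.mem_filter.mpr ⟨Finset.mem_filter.mpr ⟨hjJ, hj⟩, hij⟩
      have := incidence_pos hj' (h.mem_points j p hpj)
      lia

lemma independentFrom_of_upperSet (h : FinsetKConfig X Y Ls D) (hm : 2 ≤ m)
    (hJ : IsUpperSet (J : Set (Fin (n + 1))))
    (hA : ∀ L ∈ A, ∀ i ∈ J, ∃ p ∈ Y i, p ∈ L.points)
    (hA' : ∀ i ∈ J, ∀ p ∈ Y i, incidence id A p ≤ 1)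
    (hr : IndependentFrom X (fun p ↦ m - incidence Ls J p - incidence id A p)
      (m * D - 1 - J.card - A.card)) :
    IndependentFrom X (fun p ↦ m - incidence Ls {j ∈ J | (pointsOn X (Ls j)).card = D} p -
      incidence id A p)
      (m * D - 1 - Finset.card {j ∈ J | (pointsOn X (Ls j)).card = D} - A.card) := by
  refine .of_residual_lines Ls {j ∈ J | (pointsOn X (Ls j)).card ≠ D} (fun i hi ↦ ?_)
    (hr.mono (fun p _ ↦ ?_) ?_)
  · obtain ⟨hiJ, hi_nonfull⟩ := Finset.mem_filter.mp hi
    refine (h.sum_pointsOn_nonfull_le hm hJ hA' hiJ).trans ?_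
    have h_full := card_le_sum_incidence (T := Y i) (M := Ls)
      (S := {j ∈ {j ∈ J | (pointsOn X (Ls j)).card = D} | j < i}) fun j hj ↦ by
        simp only [Finset.mem_filter] at hj
        exact h.exists_mem_of_card_pointsOn_eq hj.1.2 hj.2
    have h_A := card_le_sum_incidence (T := Y i) (M := id) fun L hL ↦ hA L hL i hiJ
    have h_count :=
      card_full_add_card_nonfull (P := fun j ↦ (pointsOn X (Ls j)).card = D) hJ hiJ hi_nonfull
    have h_card := h.card_pointsOn i
    have h_add := h.card_add_le i
    have h_extra := h.card_sdiff_add_le i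
    have h_lt := (h.card_pointsOn_le (Ls i)).lt_of_ne hi_nonfull
    rw [Finset.sum_add_distrib]
    zify at *
    nlinarith
  · have := incidence_filter_add_filter_not (fun j ↦ (pointsOn X (Ls j)).card = D) Ls J p
    lia
  · have := Finset.card_filter_add_card_filter_not (s := J) fun j ↦ (pointsOn X (Ls j)).card = D
    lia

end FinsetKConfig

end FullLinesOfConfigurations

section LargeConfigurations

namespace FinsetKConfig

variable {K : Type} [Field K] {n : ℕ} {X : Finset (P2 K)} {Y : Fin (n + 1) → Finset (P2 K)}
  {Ls : Fin (n + 1) → ProjLine K} {D m r : ℕ}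

lemma independentFrom_sub_mul_incidence (h : FinsetKConfig X Y Ls D) (hD : n + 1 < D)
    (hr : 1 ≤ r) (hrm : r ≤ m) :
    IndependentFrom X (fun p ↦ m - r * incidence Ls Finset.univ p) (m * D - 1 - r * (n + 1)) := by
  induction hrm using Nat.decreasingInduction with
  | self =>
    refine independentFrom_of_nonpos _ fun p hp ↦ ?_
    obtain ⟨i, hi⟩ := (h.mem_iff p).mp hp
    have := incidence_pos (Finset.mem_univ i) (h.mem_points i p hi)
    nlinarith
  | of_succ r hrm ih =>
    refine .of_residual_lines Ls Finset.univ (fun i _ ↦ ?_) ((ih (by lia)).mono (fun p _ ↦ ?_) ?_)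
    · have h_sum := h.sum_pointsOn_le i (a := m - r) (b := m - r - 1) (c := 0) (e := 0)
        (g := fun p ↦ max 0 (m - r * incidence Ls Finset.univ p - incidence Ls {j | i < j} p))
        (fun p hp ↦ max_le ?_ ?_) (fun p hp ↦ max_le ?_ ?_)
      · refine h_sum.trans ?_
        have h_add := h.card_add_le i
        have h_extra := h.card_sdiff_add_le i
        have h_rD : r * (n + 2) ≤ r * D := Nat.mul_le_mul_left r hD
        have h_card := card_filter_lt_add (by simp [isUpperSet_univ]) (Finset.mem_univ i)
        simp only [Pi.zero_apply, Finset.sum_const_zero]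
        zify at *
        nlinarith
      · simp only [Pi.zero_apply]
        lia
      · have := incidence_pos (Finset.mem_univ i) (h.mem_points i p hp)
        simp only [Pi.zero_apply]
        nlinarith
      · simp only [Pi.zero_apply]
        lia
      · obtain ⟨hpi, j, hij, hpj⟩ := h.mem_pointsOn_sdiff_iff.mp hp
        have := incidence_pos (Finset.mem_univ i) hpi
        have := incidence_pos (S := {j | i < j}) (by simpa using hij) (h.mem_points j p hpj)
        simp only [Pi.zero_apply]
        nlinarith
    · push_cast
      linarith
    · rw [Finset.card_fin]
      push_cast
      linarith

theorem deltaHilb_eq_ncard_of_lt (h : FinsetKConfig X Y Ls D) (hD : n + 1 < D) (hm : 2 ≤ m) :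
    deltaHilb (fatIdeal (X : Set (P2 K)) m) (m * D - 1) =
      ({L : ProjLine K | ((X : Set (P2 K)) ∩ L.points).ncard = D}.ncard : ℤ) := by
  have h_card := Finset.card_image_of_injective {j | (pointsOn X (Ls j)).card = D} h.injective
  have h_card_le : Finset.card {j | (pointsOn X (Ls j)).card = D} ≤ n + 1 :=
    (Finset.card_filter_le _ _).trans_eq (Finset.card_fin _)
  have h_mD : 2 * D ≤ m * D := Nat.mul_le_mul_right D hm
  refine deltaHilb_eq_ncard_of_independentFrom (F := .image Ls {j | (pointsOn X (Ls j)).card = D})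
    (fun L ↦ ⟨fun hL ↦ ?_, fun hL ↦ ?_⟩) (by lia) (by lia) ?_
  · obtain ⟨i, hi, rfl⟩ := Finset.mem_image.mp hL
    exact (Finset.mem_filter.mp hi).2
  · by_contra hL'
    have := h.card_pointsOn_le_of_forall_ne (L := L) fun i e ↦ hL' <|
      Finset.mem_image.mpr ⟨i, Finset.mem_filter.mpr ⟨Finset.mem_univ i, e ▸ hL⟩, e⟩
    lia
  · have h_all := h.independentFrom_sub_mul_incidence hD le_rfl (one_le_two.trans hm)
    refine (h.independentFrom_of_upperSet hm (J := .univ) (A := ∅) (by simp [isUpperSet_univ])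
      (by simp) (by simp) (h_all.mono (fun p _ ↦ ?_) ?_)).mono (fun p _ ↦ ?_) ?_
    · simp
    · simp
    · simp [incidence_image h.injective]
    · simp [h_card]

end FinsetKConfig

end LargeConfigurations

section Pencils

variable {K : Type} [Field K] {T : Finset (P2 K)} {P p : P2 K} {L : ProjLine K}
  {A : Finset (ProjLine K)}

/-- The lines joining `P` to a point of `T`. -/
noncomputable def pencil (P : P2 K) (T : Finset (P2 K)) : Finset (ProjLine K) :=
  T.image (ProjLine.through P)

lemma mem_of_mem_pencil (hL : L ∈ pencil P T) : P ∈ L.points := by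
  obtain ⟨q, -, rfl⟩ := Finset.mem_image.mp hL
  exact ProjLine.left_mem_through P q

lemma exists_mem_of_mem_pencil (hL : L ∈ pencil P T) : ∃ q ∈ T, q ∈ L.points := by
  obtain ⟨q, hq, rfl⟩ := Finset.mem_image.mp hL
  exact ⟨q, hq, ProjLine.right_mem_through P q⟩

lemma mem_pencil_of_mem (hpP : p ≠ P) (hpT : p ∈ T) (hp : p ∈ L.points) (hP : P ∈ L.points) :
    L ∈ pencil P T :=
  Finset.mem_image.mpr ⟨p, hpT, ProjLine.eq_of_mem_of_mem hpP (ProjLine.right_mem_through P p)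
    (ProjLine.left_mem_through P p) hp hP⟩

lemma card_pencil (hT : ∀ p ∈ T, p ∈ L.points) (hP : P ∉ L.points) :
    (pencil P T).card = T.card := by
  refine Finset.card_image_of_injOn fun p hp q hq hpq ↦ by_contra fun hne ↦ hP ?_
  rw [← ProjLine.eq_of_mem_of_mem hne (ProjLine.right_mem_through P p)
    (hpq ▸ ProjLine.right_mem_through P q) (hT p hp) (hT q hq)]
  exact ProjLine.left_mem_through P p

lemma incidence_of_subset_pencil (hA : A ⊆ pencil P T) : incidence id A P = A.card :=
  congrArg Finset.card (Finset.filter_true_of_mem fun _ hL ↦ mem_of_mem_pencil (hA hL))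

lemma incidence_le_one_of_subset_pencil (hA : A ⊆ pencil P T) (hpP : p ≠ P) :
    incidence id A p ≤ 1 :=
  incidence_le_one fun _ hL _ hL' hp hp' ↦ ProjLine.eq_of_mem_of_mem hpP hp
    (mem_of_mem_pencil (hA hL)) hp' (mem_of_mem_pencil (hA hL'))

end Pencils

section SmallConfigurations

namespace FinsetKConfig

variable {K : Type} [Field K] {n : ℕ} {X : Finset (P2 K)} {Y : Fin (n + 1) → Finset (P2 K)}
  {Ls : Fin (n + 1) → ProjLine K} {m r : ℕ} {L : ProjLine K} {i j : Fin (n + 1)} {P p : P2 K}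
  {A : Finset (ProjLine K)}

lemma notMem_points_of_pos {D : ℕ} (h : FinsetKConfig X Y Ls D) (hP : Y 0 = {P}) (hj : 0 < j) :
    P ∉ (Ls j).points :=
  h.notMem_points j 0 hj P (hP ▸ Finset.mem_singleton_self P)

lemma ne_of_mem_of_pos {D : ℕ} (h : FinsetKConfig X Y Ls D) (hP : Y 0 = {P}) (hj : 0 < j)
    (hp : p ∈ Y j) : p ≠ P :=
  ne_of_mem_of_not_mem (h.mem_points j p hp) (h.notMem_points_of_pos hP hj)

lemma incidence_Ioi_zero_pos {D : ℕ} (h : FinsetKConfig X Y Ls D) (hP : Y 0 = {P}) (hp : p ∈ X)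
    (hpP : p ≠ P) : 0 < incidence Ls (Finset.Ioi 0) p := by
  obtain ⟨j, hj⟩ := (h.mem_iff p).mp hp
  refine incidence_pos (Finset.mem_Ioi.mpr (Fin.pos_iff_ne_zero.mpr ?_)) (h.mem_points j p hj)
  rintro rfl
  exact hpP (Finset.mem_singleton.mp (hP ▸ hj))

lemma exists_mem_of_mem_of_card_pointsOn_eq (h : FinsetKConfig X Y Ls (n + 1)) (hP : Y 0 = {P})
    (hPL : P ∈ L.points) (hL : (pointsOn X L).card = n + 1) (hi : 0 < i) :
    ∃ p ∈ Y i, p ∈ L.points := by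
  by_cases hne : ∀ j, Ls j ≠ L
  · exact h.exists_mem_of_forall_ne hne hL i
  · push Not at hne
    obtain ⟨j, rfl⟩ := hne
    obtain rfl : j = 0 := not_not.mp fun hj ↦
      h.notMem_points_of_pos hP (Fin.pos_iff_ne_zero.mpr hj) hPL
    exact h.exists_mem_of_card_pointsOn_eq hL hi

lemma card_sdiff_add_lt_add {D : ℕ} (h : FinsetKConfig X Y Ls D) (i : Fin (n + 1)) :
    (pointsOn X (Ls i) \ Y i).card + i <
      n + Finset.card {p ∈ pointsOn X (Ls i) | p ∈ Y (Fin.last n)} := by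
  by_cases hi : ∃ p ∈ Y (Fin.last n), p ∈ (Ls i).points
  · obtain ⟨p, hp, hpi⟩ := hi
    have h_pos : 0 < Finset.card {p ∈ pointsOn X (Ls i) | p ∈ Y (Fin.last n)} :=
      Finset.card_pos.mpr
        ⟨p, Finset.mem_filter.mpr ⟨mem_pointsOn.mpr ⟨h.subset _ hp, hpi⟩, hp⟩⟩
    exact (h.card_sdiff_add_le i).trans_lt (lt_add_of_pos_right n h_pos)
  · push Not at hi
    refine (h.card_sdiff_add_lt ((Fin.le_last i).lt_of_ne ?_) hi).trans_le (Nat.le_add_right _ _)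
    rintro rfl
    obtain ⟨p, hp⟩ := Finset.card_pos.mp (h.one_le (Fin.last n))
    exact hi p hp (h.mem_points _ p hp)

lemma independentFrom_one_sub_indicator_last (h : FinsetKConfig X Y Ls (n + 1)) :
    IndependentFrom X (fun p ↦ 1 - if p ∈ Y (Fin.last n) then 1 else 0) n := by
  refine .of_residual_lines Ls (Finset.Iio (Fin.last n)) (fun i hi ↦ ?_)
    (independentFrom_of_nonpos _ fun p hp ↦ ?_)
  · have hil := Finset.mem_Iio.mp hi
    have h_sum := h.sum_pointsOn_le i (a := 1) (b := 0) (c := 0) (e := 0)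
      (g := fun p ↦ max 0 ((1 - if p ∈ Y (Fin.last n) then 1 else 0) -
        incidence Ls {j ∈ Finset.Iio (Fin.last n) | i < j} p))
      (fun p _ ↦ by simp only [Pi.zero_apply]; split_ifs <;> lia) fun p hp ↦ ?_
    · have h_Ioo : Finset.card {j ∈ Finset.Iio (Fin.last n) | i < j} + (i + 1) = n := by
        have h_eq : {j ∈ Finset.Iio (Fin.last n) | i < j} = Finset.Ioo i (Fin.last n) := by
          ext j
          rw [Finset.mem_filter, Finset.mem_Iio, Finset.mem_Ioo, and_comm]
        rw [h_eq, Fin.card_Ioo, Fin.val_last]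
        lia
      have h_add := h.card_add_le i
      simp only [Pi.zero_apply, Finset.sum_const_zero] at h_sum
      lia
    · obtain ⟨-, j, hij, hpj⟩ := h.mem_pointsOn_sdiff_iff.mp hp
      simp only [Pi.zero_apply]
      split_ifs with hpl
      · lia
      · have hj : j ∈ ({j ∈ Finset.Iio (Fin.last n) | i < j} : Finset _) := Finset.mem_filter.mpr
          ⟨Finset.mem_Iio.mpr ((Fin.le_last j).lt_of_ne fun e ↦ hpl (e ▸ hpj)), hij⟩
        have := incidence_pos hj (h.mem_points j p hpj)
        lia
  · obtain ⟨j, hpj⟩ := (h.mem_iff p).mp hp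
    split_ifs with hpl
    · lia
    · have hj := Finset.mem_Iio.mpr ((Fin.le_last j).lt_of_ne fun e ↦ hpl (e ▸ hpj))
      have := incidence_pos hj (h.mem_points j p hpj)
      lia

lemma independentFrom_sub_indicator_last (h : FinsetKConfig X Y Ls (n + 1)) (hm : 1 ≤ m) :
    IndependentFrom X (fun p ↦ m - if p ∈ Y (Fin.last n) then 1 else 0) (m * (n + 1) - 1) := by
  induction m, hm using Nat.le_induction with
  | base => exact h.independentFrom_one_sub_indicator_last.mono (fun p _ ↦ by simp) (by simp)
  | succ m hm ih =>
    refine .of_residual_lines Ls Finset.univ (fun i _ ↦ ?_) (ih.mono (fun p hp ↦ ?_) ?_)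
    · set c : P2 K → ℤ := fun p ↦ if p ∈ Y (Fin.last n) then 1 else 0 with hc
      have h_sum := h.sum_pointsOn_le i (a := m + 1) (b := m) (c := c) (e := c)
        (g := fun p ↦ max 0 ((m + 1 : ℕ) - c p - incidence Ls {j | i < j} p))
        (fun p _ ↦ by simp only [hc]; split_ifs <;> lia) fun p hp ↦ ?_
      · have h_c : ∑ p ∈ pointsOn X (Ls i) \ Y i, c p + ∑ p ∈ Y i, c p =
            Finset.card {p ∈ pointsOn X (Ls i) | p ∈ Y (Fin.last n)} := by
          rw [Finset.sum_sdiff (h.subset_pointsOn i), Finset.sum_boole]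
        have h_card := card_filter_lt_add (by simp [isUpperSet_univ]) (Finset.mem_univ i)
        have h_add := h.card_add_le i
        have h_extra := h.card_sdiff_add_le i
        have h_lt := h.card_sdiff_add_lt_add i
        refine h_sum.trans ?_
        zify at *
        nlinarith
      · obtain ⟨-, j, hij, hpj⟩ := h.mem_pointsOn_sdiff_iff.mp hp
        have := incidence_pos (S := {j | i < j}) (by simpa using hij) (h.mem_points j p hpj)
        simp only [hc]
        split_ifs <;> lia
    · obtain ⟨j, hpj⟩ := (h.mem_iff p).mp hp
      have := incidence_pos (Finset.mem_univ j) (h.mem_points j p hpj)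
      lia
    · rw [Finset.card_fin]
      push_cast
      linarith

/-- The lines containing `D` points of `X` that join `P` to a point of `T`. -/
noncomputable def fullPencil (X : Finset (P2 K)) (D : ℕ) (P : P2 K) (T : Finset (P2 K)) :
    Finset (ProjLine K) :=
  {L ∈ pencil P T | (pointsOn X L).card = D}

/-- The fat point scheme left after removing the lines `Ls j`, `j ≠ 0`, each `r` times, and `a`
lines of the pencil from `P` to the points on the last line, among them all full ones, imposes
independent conditions. If there are more than `a` full lines, exactly these are removed. -/
def ResidualIndependent (X : Finset (P2 K)) (Y : Fin (n + 1) → Finset (P2 K))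
    (Ls : Fin (n + 1) → ProjLine K) (P : P2 K) (m r a : ℕ) : Prop :=
  ∀ A ⊆ pencil P (Y (Fin.last n)), fullPencil X (n + 1) P (Y (Fin.last n)) ⊆ A →
    A.card = max a (fullPencil X (n + 1) P (Y (Fin.last n))).card →
    IndependentFrom X (fun p ↦ m - r * incidence Ls (Finset.Ioi 0) p - incidence id A p)
      (m * (n + 1) - 1 - r * n - A.card)

lemma card_pencil_last (h : FinsetKConfig X Y Ls (n + 1)) (hn : 0 < Fin.last n) (hP : Y 0 = {P}) :
    (pencil P (Y (Fin.last n))).card = n + 1 := by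
  rw [card_pencil (h.mem_points (Fin.last n)) (h.notMem_points_of_pos hP hn), h.card_last]

lemma residualIndependent_card (h : FinsetKConfig X Y Ls (n + 1)) (hn : 0 < Fin.last n)
    (hP : Y 0 = {P}) (hm : n + 2 ≤ m) : ResidualIndependent X Y Ls P m (n + 1) (n + 1) := by
  intro A hA _ hA_card
  have h_pencil := h.card_pencil_last hn hP
  obtain rfl : A = pencil P (Y (Fin.last n)) := Finset.eq_of_subset_of_card_le hA (by lia)
  have h_last := h.independentFrom_sub_indicator_last (m := m - (n + 1)) (by lia)
  rw [Nat.cast_sub (by lia)] at h_last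
  refine h_last.mono (fun p hp ↦ ?_) (by rw [h_pencil]; push_cast; linarith)
  by_cases hpP : p = P
  · subst hpP
    rw [if_neg fun hpl ↦ h.ne_of_mem_of_pos hP hn hpl rfl,
      incidence_of_subset_pencil subset_rfl, h_pencil]
    nlinarith
  · have := h.incidence_Ioi_zero_pos hP hp hpP
    split_ifs with hpl
    · have hL : ProjLine.through P p ∈ pencil P (Y (Fin.last n)) := Finset.mem_image_of_mem _ hpl
      have := incidence_pos (M := id) hL (ProjLine.right_mem_through P p)
      nlinarith
    · nlinarith

lemma sum_pointsOn_pencil_le (h : FinsetKConfig X Y Ls (n + 1)) (hP : Y 0 = {P}) (hr : r ≤ m)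
    (hA : A ⊆ pencil P (Y (Fin.last n))) (hA_card : A.card + 1 = r) (L : ProjLine K) :
    ∑ p ∈ pointsOn X L, max 0 ((m : ℤ) - r * incidence Ls (Finset.Ioi 0) p - incidence id A p) ≤
      (pointsOn X L).card * (m - r) + 1 := by
  calc _ ≤ ∑ p ∈ pointsOn X L, ((m : ℤ) - r + if p = P then 1 else 0) := by
        refine Finset.sum_le_sum fun p hp ↦ ?_
        split_ifs with hpP
        · subst hpP
          have := incidence_of_subset_pencil hA
          exact max_le (by lia) (by nlinarith)
        · have := h.incidence_Ioi_zero_pos hP (mem_pointsOn.mp hp).1 hpP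
          exact max_le (by lia) (by nlinarith)
    _ ≤ _ := by
        rw [Finset.sum_add_distrib, Finset.sum_const, nsmul_eq_mul, Finset.sum_ite_eq']
        split_ifs <;> lia

lemma ResidualIndependent.pred (h : FinsetKConfig X Y Ls (n + 1)) (hn : 0 < Fin.last n)
    (hP : Y 0 = {P}) (hm : n + 2 ≤ m) (hr : r ≤ n)
    (h_res : ResidualIndependent X Y Ls P m (r + 1) (r + 1)) :
    ResidualIndependent X Y Ls P m (r + 1) r := by
  intro A hA hQA hA_card
  by_cases hrQ : r + 1 ≤ (fullPencil X (n + 1) P (Y (Fin.last n))).card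
  · exact h_res A hA hQA (by lia)
  · have h_pencil := h.card_pencil_last hn hP
    obtain ⟨L, hL, hLA⟩ := Finset.exists_mem_notMem_of_card_lt_card
      (show A.card < (pencil P (Y (Fin.last n))).card by lia)
    have h_insert := Finset.card_insert_of_notMem hLA
    refine .of_residual L ?_ ((h_res (insert L A) (Finset.insert_subset hL hA)
      (hQA.trans (Finset.subset_insert L A)) (by lia)).mono (fun p _ ↦ ?_) ?_)
    · refine (h.sum_pointsOn_pencil_le hP (r := r + 1) (by lia) hA (by lia) L).trans ?_
      have h_ne : (pointsOn X L).card ≠ n + 1 := fun hL_card ↦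
        hLA (hQA (Finset.mem_filter.mpr ⟨hL, hL_card⟩))
      have h_lt := (h.card_pointsOn_le L).lt_of_ne h_ne
      have h_card : A.card = r := by lia
      zify at *
      nlinarith
    · rw [incidence_insert hLA, id_eq]
      push_cast
      lia
    · rw [h_insert]
      push_cast
      linarith

lemma exists_subset_forall_exists_mem (h : FinsetKConfig X Y Ls (n + 1)) (hP : Y 0 = {P})
    (hi : 0 < i) (hr : 1 ≤ r) (hA : A ⊆ pencil P (Y (Fin.last n)))
    (hQA : fullPencil X (n + 1) P (Y (Fin.last n)) ⊆ A)
    (hA_card : A.card = max r (fullPencil X (n + 1) P (Y (Fin.last n))).card) :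
    ∃ B ⊆ A, (∀ L ∈ B, ∃ p ∈ Y i, p ∈ L.points) ∧ A.card + i + 1 ≤ B.card + r + n := by
  rcases (Fin.le_last i).eq_or_lt with rfl | hil
  · exact ⟨A, subset_rfl, fun L hL ↦ exists_mem_of_mem_pencil (hA hL), by rw [Fin.val_last]; lia⟩
  · refine ⟨_, hQA, fun L hL ↦ ?_, ?_⟩
    · obtain ⟨hL, hL_card⟩ := Finset.mem_filter.mp hL
      exact h.exists_mem_of_mem_of_card_pointsOn_eq hP (mem_of_mem_pencil hL) hL_card hi
    · have : (i : ℕ) < n := hil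
      lia

lemma ResidualIndependent.round (h : FinsetKConfig X Y Ls (n + 1))
    (hP : Y 0 = {P}) (hm : n + 2 ≤ m) (hr : 1 ≤ r) (hrn : r ≤ n)
    (h_res : ResidualIndependent X Y Ls P m (r + 1) r) : ResidualIndependent X Y Ls P m r r := by
  intro A hA hQA hA_card
  refine .of_residual_lines Ls (Finset.Ioi 0) (fun i hi ↦ ?_)
    ((h_res A hA hQA hA_card).mono (fun p _ ↦ ?_) ?_)
  · have hi0 := Finset.mem_Ioi.mp hi
    obtain ⟨B, hBA, hB, hB_card⟩ := h.exists_subset_forall_exists_mem hP hi0 hr hA hQA hA_card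
    have h_sum := h.sum_pointsOn_le i (a := m - r) (b := m - r - 2) (c := fun p ↦ incidence id B p)
      (e := 0) (g := fun p ↦ max 0 (m - r * incidence Ls (Finset.Ioi 0) p - incidence id A p -
        incidence Ls {j ∈ Finset.Ioi 0 | i < j} p)) (fun p hp ↦ ?_) fun p hp ↦ ?_
    · refine h_sum.trans ?_
      have h_B := card_le_sum_incidence (T := Y i) (M := id) hB
      have h_card := card_filter_lt_add (Finset.coe_Ioi (0 : Fin (n + 1)) ▸ isUpperSet_Ioi 0) hi
      have h_add := h.card_add_le i
      have h_extra := h.card_sdiff_add_le i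
      simp only [Pi.zero_apply, Finset.sum_const_zero]
      zify at *
      nlinarith
    · have := incidence_pos hi (h.mem_points i p hp)
      have := incidence_mono hBA id p
      have := incidence_le_one_of_subset_pencil (hBA.trans hA) (h.ne_of_mem_of_pos hP hi0 hp)
      exact max_le (by lia) (by nlinarith)
    · obtain ⟨hpi, j, hij, hpj⟩ := h.mem_pointsOn_sdiff_iff.mp hp
      have hj : j ∈ Finset.Ioi (0 : Fin (n + 1)) := Finset.mem_Ioi.mpr (hi0.trans hij)
      have := two_le_incidence hij.ne hi hj hpi (h.mem_points j p hpj)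
      have := incidence_pos (S := {j ∈ Finset.Ioi 0 | i < j}) (Finset.mem_filter.mpr ⟨hj, hij⟩)
        (h.mem_points j p hpj)
      rw [Pi.zero_apply]
      exact max_le (by lia) (by nlinarith)
  · push_cast
    linarith
  · rw [Fin.card_Ioi, Fin.val_zero]
    push_cast
    lia

lemma residualIndependent (h : FinsetKConfig X Y Ls (n + 1)) (hn : 0 < Fin.last n)
    (hP : Y 0 = {P}) (hm : n + 2 ≤ m) (hr : r ≤ n) : ResidualIndependent X Y Ls P m (r + 1) r := by
  refine .pred h hn hP hm hr ?_
  induction hr using Nat.decreasingInduction with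
  | self => exact h.residualIndependent_card hn hP hm
  | of_succ r hrn ih => exact .round h hP hm (by lia) hrn (.pred h hn hP hm hrn ih)

lemma disjoint_image_fullPencil {D : ℕ} {T : Finset (P2 K)} {J : Finset (Fin (n + 1))}
    (h : FinsetKConfig X Y Ls D) (hP : Y 0 = {P}) (hJ : ∀ j ∈ J, 0 < j) :
    Disjoint (J.image Ls) (fullPencil X D P T) := by
  refine Finset.disjoint_left.mpr fun L hL hLP ↦ ?_
  obtain ⟨j, hj, rfl⟩ := Finset.mem_image.mp hL
  exact h.notMem_points_of_pos hP (hJ j hj) (mem_of_mem_pencil (Finset.mem_filter.mp hLP).1)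

lemma mem_image_union_fullPencil_iff (h : FinsetKConfig X Y Ls (n + 1)) (hn : 0 < Fin.last n)
    (hP : Y 0 = {P}) :
    L ∈ Finset.image Ls {j ∈ Finset.Ioi 0 | (pointsOn X (Ls j)).card = n + 1} ∪
      fullPencil X (n + 1) P (Y (Fin.last n)) ↔ (pointsOn X L).card = n + 1 := by
  rw [Finset.mem_union, Finset.mem_image]
  constructor
  · rintro (⟨j, hj, rfl⟩ | hL)
    exacts [(Finset.mem_filter.mp hj).2, (Finset.mem_filter.mp hL).2]
  · intro hL
    by_cases hPL : P ∈ L.points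
    · obtain ⟨p, hp, hpL⟩ := h.exists_mem_of_mem_of_card_pointsOn_eq hP hPL hL hn
      exact .inr (Finset.mem_filter.mpr
        ⟨mem_pencil_of_mem (h.ne_of_mem_of_pos hP hn hp) hp hpL hPL, hL⟩)
    · have hj : ∃ j, Ls j = L := by
        by_contra! hne
        obtain ⟨p, hp, hpL⟩ := h.exists_mem_of_forall_ne hne hL 0
        rw [hP, Finset.mem_singleton] at hp
        exact hPL (hp ▸ hpL)
      obtain ⟨j, rfl⟩ := hj
      refine .inl ⟨j, Finset.mem_filter.mpr ⟨Finset.mem_Ioi.mpr ?_, hL⟩, rfl⟩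
      refine Fin.pos_iff_ne_zero.mpr ?_
      rintro rfl
      exact hPL (h.mem_points 0 P (hP ▸ Finset.mem_singleton_self P))

lemma independentFrom_of_card_eq (h : FinsetKConfig X Y Ls (n + 1)) (hn : 0 < Fin.last n)
    (hP : Y 0 = {P}) (hm : n + 2 ≤ m) :
    IndependentFrom X (fun p ↦
      m - incidence Ls {j ∈ Finset.Ioi 0 | (pointsOn X (Ls j)).card = n + 1} p -
        incidence id (fullPencil X (n + 1) P (Y (Fin.last n))) p)
      (m * (n + 1 : ℕ) - 1 -
        Finset.card {j ∈ Finset.Ioi 0 | (pointsOn X (Ls j)).card = n + 1} -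
        (fullPencil X (n + 1) P (Y (Fin.last n))).card) := by
  have hQ : fullPencil X (n + 1) P (Y (Fin.last n)) ⊆ pencil P (Y (Fin.last n)) :=
    Finset.filter_subset _ _
  have h_res := h.residualIndependent hn hP hm (Nat.zero_le n) _ hQ subset_rfl (by simp)
  exact h.independentFrom_of_upperSet (by lia) (Finset.coe_Ioi (0 : Fin (n + 1)) ▸ isUpperSet_Ioi 0)
    (fun L hL i hi ↦ h.exists_mem_of_mem_of_card_pointsOn_eq hP
      (mem_of_mem_pencil (hQ hL)) (Finset.mem_filter.mp hL).2 (Finset.mem_Ioi.mp hi))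
    (fun i hi p hp ↦ incidence_le_one_of_subset_pencil hQ
      (h.ne_of_mem_of_pos hP (Finset.mem_Ioi.mp hi) hp))
    (h_res.mono (fun p _ ↦ by simp) (by simp))

theorem deltaHilb_eq_ncard_of_card_eq (h : FinsetKConfig X Y Ls (n + 1)) (hn : 0 < Fin.last n)
    (hP : Y 0 = {P}) (hm : n + 2 ≤ m) :
    deltaHilb (fatIdeal (X : Set (P2 K)) m) (m * (n + 1 : ℕ) - 1) =
      ({L : ProjLine K | ((X : Set (P2 K)) ∩ L.points).ncard = n + 1}.ncard : ℤ) := by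
  have h_indep := h.independentFrom_of_card_eq hn hP hm
  have h_mem (L : ProjLine K) := h.mem_image_union_fullPencil_iff (L := L) hn hP
  set Q := fullPencil X (n + 1) P (Y (Fin.last n))
  set J : Finset (Fin (n + 1)) := {j ∈ Finset.Ioi 0 | (pointsOn X (Ls j)).card = n + 1}
  have h_disjoint : Disjoint (J.image Ls) Q := h.disjoint_image_fullPencil hP fun j hj ↦
    Finset.mem_Ioi.mp (Finset.mem_filter.mp hj).1
  have h_card : (J.image Ls ∪ Q).card = J.card + Q.card := by
    rw [Finset.card_union_of_disjoint h_disjoint, Finset.card_image_of_injective _ h.injective]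
  have hQ_card : Q.card ≤ n + 1 :=
    (Finset.card_filter_le _ _).trans_eq (h.card_pencil_last hn hP)
  have hJ_card : J.card ≤ n := (Finset.card_filter_le _ _).trans_eq (by simp)
  refine deltaHilb_eq_ncard_of_independentFrom (F := J.image Ls ∪ Q) h_mem
    (by rw [h_card]; nlinarith) (by nlinarith) (h_indep.mono (fun p _ ↦ ?_) ?_)
  · rw [incidence_union h_disjoint, incidence_image h.injective]
    push_cast
    lia
  · rw [h_card]
    push_cast
    lia

end FinsetKConfig

end SmallConfigurations

section MainTheorem

variable {K : Type} [Field K]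

lemma IsKConfig.exists_finsetKConfig {n : ℕ} {X : Set (P2 K)} {d : Fin (n + 1) → ℕ}
    {Xs : Fin (n + 1) → Set (P2 K)} {Ls : Fin (n + 1) → ProjLine K} (hX : IsKConfig X d Xs Ls) :
    ∃ (X' : Finset (P2 K)) (Y : Fin (n + 1) → Finset (P2 K)),
      ↑X' = X ∧ FinsetKConfig X' Y Ls (d (Fin.last n)) := by
  have h_finite (i) : (Xs i).Finite := Set.finite_of_ncard_pos (hX.card_eq i ▸ hX.one_le i)
  have hX_finite : X.Finite := hX.union_eq ▸ Set.finite_iUnion h_finite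
  have h_card (i) : (h_finite i).toFinset.card = d i := by
    rw [← hX.card_eq, Set.ncard_eq_toFinset_card _ (h_finite i)]
  refine ⟨hX_finite.toFinset, fun i ↦ (h_finite i).toFinset, hX_finite.coe_toFinset, ?_⟩
  exact {
    mem_iff := fun p ↦ by simp [hX.union_eq]
    mem_points := fun i p hp ↦ hX.subset_line i ((h_finite i).mem_toFinset.mp hp)
    notMem_points := fun i j hji p hp ↦ hX.not_mem i j hji p ((h_finite j).mem_toFinset.mp hp)
    one_le := fun i ↦ h_card i ▸ hX.one_le i
    strictMono := fun i j hij ↦ by simpa only [h_card] using hX.strictMono hij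
    injective := hX.lines_distinct
    card_last := h_card _ }

theorem mainTheorem_general {s : ℕ} (hs : 0 < s)
    (X : Set (P2 K)) (d : Fin s → ℕ) (Xs : Fin s → Set (P2 K)) (Ls : Fin s → ProjLine K)
    (hX : IsKConfig X d Xs Ls)
    (ds : ℕ) (hds : ds = d ⟨s - 1, Nat.sub_lt hs Nat.one_pos⟩)
    (hne : ¬ (s = 1 ∧ ds = 1)) :
    (∃ m₀ : ℕ, ∀ m : ℕ, m₀ ≤ m →
      deltaHilb (fatIdeal X m) ((m : ℤ) * ds - 1) =
        ({L : ProjLine K | (X ∩ L.points).ncard = ds}.ncard : ℤ)) ∧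
    (s < ds → ∀ m : ℕ, 2 ≤ m →
      deltaHilb (fatIdeal X m) ((m : ℤ) * ds - 1) =
        ({L : ProjLine K | (X ∩ L.points).ncard = ds}.ncard : ℤ)) ∧
    (ds = s → ∀ m : ℕ, s + 1 ≤ m →
      deltaHilb (fatIdeal X m) ((m : ℤ) * ds - 1) =
        ({L : ProjLine K | (X ∩ L.points).ncard = ds}.ncard : ℤ)) := by
  obtain ⟨n, rfl⟩ := Nat.exists_eq_add_one.mpr hs
  obtain ⟨X, Y, rfl, h⟩ := hX.exists_finsetKConfig
  obtain rfl : ds = d (Fin.last n) := hds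
  have h_eq (he : d (Fin.last n) = n + 1) (m : ℕ) (hm : n + 1 + 1 ≤ m) :
      deltaHilb (fatIdeal (X : Set (P2 K)) m) (m * d (Fin.last n) - 1) =
        ({L : ProjLine K | ((X : Set (P2 K)) ∩ L.points).ncard = d (Fin.last n)}.ncard : ℤ) := by
    have hn : n ≠ 0 := by
      rintro rfl
      exact hne ⟨rfl, he⟩
    have h_one := h.one_le 0
    have h_add := h.card_add_le 0
    obtain ⟨P, hP⟩ := Finset.card_eq_one.mp (show (Y 0).card = 1 by
      rw [Fin.val_zero] at h_add
      lia)
    rw [he] at h ⊢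
    exact h.deltaHilb_eq_ncard_of_card_eq (Fin.lt_def.mpr (Nat.pos_of_ne_zero hn)) hP hm
  refine ⟨?_, fun hlt m ↦ h.deltaHilb_eq_ncard_of_lt hlt, h_eq⟩
  rcases (Nat.succ_le_of_lt h.lt_largest).eq_or_lt with he | hlt
  · exact ⟨n + 1 + 1, h_eq he.symm⟩
  · exact ⟨2, fun m ↦ h.deltaHilb_eq_ncard_of_lt hlt⟩

end MainTheorem

/-- **Theorem (main theorem).** Let `X ⊆ P²` be a k-configuration of type
`(d₁,…,d_s) ≠ (1)`. Then there is an `m₀` such that for all `m ≥ m₀`,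
`ΔH_{mX}(m·d_s − 1)` equals the number of lines containing exactly `d_s` points
of `X`; moreover one can take `m₀ = 2` if `d_s > s` and `m₀ = s + 1` if `d_s = s`. -/
theorem mainTheorem {K : Type} [Field K] [IsAlgClosed K] {s : ℕ} (hs : 0 < s)
    (X : Set (P2 K)) (d : Fin s → ℕ) (Xs : Fin s → Set (P2 K)) (Ls : Fin s → ProjLine K)
    (hX : IsKConfig X d Xs Ls)
    (ds : ℕ) (hds : ds = d ⟨s - 1, Nat.sub_lt hs Nat.one_pos⟩)
    (hne : ¬ (s = 1 ∧ ds = 1)) :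
    (∃ m₀ : ℕ, ∀ m : ℕ, m₀ ≤ m →
      deltaHilb (fatIdeal X m) ((m : ℤ) * ds - 1) =
        ({L : ProjLine K | (X ∩ L.points).ncard = ds}.ncard : ℤ)) ∧
    (s < ds → ∀ m : ℕ, 2 ≤ m →
      deltaHilb (fatIdeal X m) ((m : ℤ) * ds - 1) =
        ({L : ProjLine K | (X ∩ L.points).ncard = ds}.ncard : ℤ)) ∧
    (ds = s → ∀ m : ℕ, s + 1 ≤ m →
      deltaHilb (fatIdeal X m) ((m : ℤ) * ds - 1) =
        ({L : ProjLine K | (X ∩ L.points).ncard = ds}.ncard : ℤ)) :=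
  mainTheorem_general hs X d Xs Ls hX ds hds hne
end

section
/- Let X ⊆ P² be a k-configuration of type (d₁,…,d_s). Then for any line L in P², the number of points of X lying on L is at most d_s, i.e. |L ∩ X| ≤ d_s. -/
/-!
Distinct lines meet in at most one point. Hence for every line `L` there is an index `i` such that
`L` misses every `Xs j` with `j < i` and contains at most one point of every `Xs j` with `j > i`:
the index of `L` among the `Ls` if `L` is one of them, and the first index otherwise. Then `L`
contains at most `d i + (s - 1 - i)` points of `X` (indices starting at `0`), and this is at most
the last degree because `d` is strictly increasing.
-/

open Finset
open scoped LinearAlgebra.Projectivization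

section Counting

variable {ι α : Type*}

theorem apply_add_card_Ioi_le_apply_top [LinearOrder ι] [OrderTop ι] [LocallyFiniteOrderTop ι]
    {f : ι → ℕ} (hf : StrictMono f) (i : ι) : f i + #(Ioi i) ≤ f ⊤ := by
  have mapsTo : Set.MapsTo f (Ioi i) (Ioc (f i) (f ⊤)) := fun j hj =>
    mem_coe.2 (mem_Ioc.2 ⟨hf (mem_Ioi.1 hj), hf.monotone le_top⟩)
  have hcard : #(Ioi i) ≤ f ⊤ - f i :=
    (card_le_card_of_injOn f mapsTo hf.injective.injOn).trans_eq (Nat.card_Ioc _ _)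
  have hle : f i ≤ f ⊤ := hf.monotone le_top
  omega

theorem ncard_biUnion_le_card_of_subsingleton {t : Finset ι} {A : ι → Set α}
    (hA : ∀ i ∈ t, (A i).Subsingleton) : (⋃ i ∈ t, A i).ncard ≤ #t :=
  calc (⋃ i ∈ t, A i).ncard ≤ ∑ i ∈ t, (A i).ncard := set_ncard_biUnion_le t A
    _ ≤ ∑ _i ∈ t, 1 := sum_le_sum fun i hi =>
      have : Finite (A i) := (hA i hi).finite
      Set.ncard_le_one_iff_subsingleton.2 (hA i hi)
    _ = #t := (card_eq_sum_ones t).symm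

theorem ncard_iUnion_inter_le_ncard_add_card_Ioi [LinearOrder ι] [LocallyFiniteOrderTop ι]
    {A : ι → Set α} {T : Set α} {i : ι} (hfin : (A i).Finite)
    (hlt : ∀ j < i, Disjoint (A j) T) (hgt : ∀ j > i, (A j ∩ T).Subsingleton) :
    ((⋃ j, A j) ∩ T).ncard ≤ (A i).ncard + #(Ioi i) := by
  have hsubset : (⋃ j, A j) ∩ T ⊆ A i ∪ ⋃ j ∈ Ioi i, A j ∩ T := by
    rintro p ⟨hp, hpT⟩
    obtain ⟨j, hj⟩ := Set.mem_iUnion.1 hp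
    rcases lt_trichotomy j i with hji | rfl | hij
    · exact absurd hpT (Set.disjoint_left.1 (hlt j hji) hj)
    · exact Or.inl hj
    · exact Or.inr (Set.mem_biUnion (mem_Ioi.2 hij) ⟨hj, hpT⟩)
  have hsingle : ∀ j ∈ Ioi i, (A j ∩ T).Subsingleton := fun j hj => hgt j (mem_Ioi.1 hj)
  have hfinUnion : (⋃ j ∈ Ioi i, A j ∩ T).Finite :=
    (Ioi i).finite_toSet.biUnion fun j hj => (hsingle j hj).finite
  calc ((⋃ j, A j) ∩ T).ncard
      ≤ (A i ∪ ⋃ j ∈ Ioi i, A j ∩ T).ncard := Set.ncard_le_ncard hsubset (hfin.union hfinUnion)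
    _ ≤ (A i).ncard + (⋃ j ∈ Ioi i, A j ∩ T).ncard := Set.ncard_union_le _ _
    _ ≤ (A i).ncard + #(Ioi i) :=
      Nat.add_le_add_left (ncard_biUnion_le_card_of_subsingleton hsingle) _

end Counting

section LinearAlgebra

variable {K V : Type*} [DivisionRing K] [AddCommGroup V] [Module K V]

theorem finrank_inf_lt_finrank_of_ne {U W : Submodule K V} [FiniteDimensional K U]
    [FiniteDimensional K W] (hUW : U ≠ W) (h : Module.finrank K U = Module.finrank K W) :
    Module.finrank K ↥(U ⊓ W) < Module.finrank K U := by
  have not_le : ¬ U ≤ W := fun hle => hUW (Submodule.eq_of_le_of_finrank_eq hle h)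
  exact Submodule.finrank_lt_finrank_of_lt (inf_lt_left.2 not_le)

theorem subsingleton_setOf_submodule_le_of_finrank_le_one {U : Submodule K V}
    [FiniteDimensional K U] (hU : Module.finrank K U ≤ 1) :
    {p : ℙ K V | p.submodule ≤ U}.Subsingleton := by
  have submodule_eq : ∀ p : ℙ K V, p.submodule ≤ U → p.submodule = U := fun p hp =>
    Submodule.eq_of_le_of_finrank_le hp (hU.trans_eq p.finrank_submodule.symm)
  exact fun p hp q hq =>
    Projectivization.submodule_injective ((submodule_eq p hp).trans (submodule_eq q hq).symm)

end LinearAlgebra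

namespace ProjLine

variable {K : Type} [Field K]

theorem toSubmodule_injective :
    Function.Injective (toSubmodule : ProjLine K → Submodule K (Fin 3 → K)) := by
  rintro ⟨U, _⟩ ⟨W, _⟩ rfl
  rfl

theorem points_inter (L M : ProjLine K) :
    L.points ∩ M.points = {p | p.submodule ≤ L.toSubmodule ⊓ M.toSubmodule} := by
  ext p
  simp only [points, Set.mem_inter_iff, Set.mem_ofPred_eq, le_inf_iff]

theorem subsingleton_points_inter {L M : ProjLine K} (h : L ≠ M) :
    (L.points ∩ M.points).Subsingleton := by
  have finrank_lt : Module.finrank K ↥(L.toSubmodule ⊓ M.toSubmodule) < 2 :=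
    (finrank_inf_lt_finrank_of_ne (toSubmodule_injective.ne h)
      (L.finrank_eq_two.trans M.finrank_eq_two.symm)).trans_eq L.finrank_eq_two
  rw [points_inter]
  exact subsingleton_setOf_submodule_le_of_finrank_le_one (Nat.le_of_lt_succ finrank_lt)

end ProjLine

namespace IsKConfig

variable {K : Type} [Field K] {s : ℕ} {X : Set (P2 K)} {d : Fin s → ℕ}
  {Xs : Fin s → Set (P2 K)} {Ls : Fin s → ProjLine K}

theorem finite (hX : IsKConfig X d Xs Ls) (i : Fin s) : (Xs i).Finite :=
  Set.finite_of_ncard_pos ((hX.one_le i).trans_eq (hX.card_eq i).symm)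

theorem subsingleton_inter_points (hX : IsKConfig X d Xs Ls) {i : Fin s} {L : ProjLine K}
    (hL : Ls i ≠ L) : (Xs i ∩ L.points).Subsingleton :=
  (ProjLine.subsingleton_points_inter hL).anti
    (Set.inter_subset_inter_left _ (hX.subset_line i))

theorem exists_disjoint_of_lt_and_subsingleton_of_gt [NeZero s] (hX : IsKConfig X d Xs Ls)
    (L : ProjLine K) :
    ∃ i, (∀ j < i, Disjoint (Xs j) L.points) ∧ ∀ j > i, (Xs j ∩ L.points).Subsingleton := by
  by_cases hL : ∃ i, Ls i = L
  · obtain ⟨i, rfl⟩ := hL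
    exact ⟨i, fun j hj => Set.disjoint_left.2 (hX.not_mem i j hj),
      fun j hj => hX.subsingleton_inter_points (hX.lines_distinct.ne hj.ne')⟩
  · exact ⟨0, fun j hj => absurd hj (Fin.not_lt_zero j),
      fun j _ => hX.subsingleton_inter_points fun h => hL ⟨j, h⟩⟩

end IsKConfig

theorem kconfig_line_le_general {K : Type} [Field K] {n : ℕ} {X : Set (P2 K)}
    {d : Fin (n + 1) → ℕ} {Xs : Fin (n + 1) → Set (P2 K)} {Ls : Fin (n + 1) → ProjLine K}
    (hX : IsKConfig X d Xs Ls) (L : ProjLine K) :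
    (X ∩ L.points).ncard ≤ d (Fin.last n) := by
  obtain ⟨i, hlt, hgt⟩ := hX.exists_disjoint_of_lt_and_subsingleton_of_gt L
  calc (X ∩ L.points).ncard
      = ((⋃ j, Xs j) ∩ L.points).ncard := by rw [hX.union_eq]
    _ ≤ (Xs i).ncard + #(Ioi i) :=
      ncard_iUnion_inter_le_ncard_add_card_Ioi (hX.finite i) hlt hgt
    _ = d i + #(Ioi i) := by rw [hX.card_eq]
    _ ≤ d (Fin.last n) := apply_add_card_Ioi_le_apply_top hX.strictMono i

/-- **Lemma (bounds), part (iii).** If `X` is a k-configuration of type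
`(d₁,…,d_s)`, then any line of `P²` contains at most `d_s` points of `X`. -/
theorem kconfig_line_le {K : Type} [Field K] [IsAlgClosed K] {s : ℕ} (hs : 0 < s)
    (X : Set (P2 K)) (d : Fin s → ℕ) (Xs : Fin s → Set (P2 K)) (Ls : Fin s → ProjLine K)
    (hX : IsKConfig X d Xs Ls)
    (ds : ℕ) (hds : ds = d ⟨s - 1, Nat.sub_lt hs Nat.one_pos⟩) :
    ∀ L : ProjLine K, (X ∩ L.points).ncard ≤ ds := by
  obtain ⟨n, rfl⟩ := Nat.exists_eq_succ_of_ne_zero hs.ne'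
  exact hds ▸ kconfig_line_le_general hX
end

section
/- Let X ⊆ P² be a k-configuration of type (d₁,…,d_s) defined using lines L₁,…,L_s, and suppose d_s > s. If L is any line in P² with |L ∩ X| = d_s, then L ∈ {L₁,…,L_s}. -/
/-!
Two distinct points of the plane lie on only one line. If `L` contains more points of `X` than
there are lines `Ls i` covering `X`, the pigeonhole principle puts two of these points on the same
`Ls i`, and therefore `L = Ls i`.
-/

theorem submodule_sup_submodule_eq_of_finrank_eq_two {K V : Type*} [DivisionRing K]
    [AddCommGroup V] [Module K V] {W : Submodule K V} (hW : Module.finrank K W = 2)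
    {p q : Projectivization K V} (hpq : p ≠ q) (hp : p.submodule ≤ W) (hq : q.submodule ≤ W) :
    p.submodule ⊔ q.submodule = W := by
  have : FiniteDimensional K W := Module.finite_of_finrank_pos (by omega)
  have hsup : p.submodule ⊔ q.submodule ≤ W := sup_le hp hq
  have : FiniteDimensional K ↥(p.submodule ⊔ q.submodule) :=
    Submodule.finiteDimensional_of_le hsup
  have hlt : p.submodule < p.submodule ⊔ q.submodule := by
    refine left_lt_sup.2 fun hqp => hpq (Projectivization.submodule_injective ?_)
    have hfinrank := q.finrank_submodule.trans p.finrank_submodule.symm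
    exact (Submodule.eq_of_le_of_finrank_eq hqp hfinrank).symm
  have hone_lt : 1 < Module.finrank K ↥(p.submodule ⊔ q.submodule) :=
    p.finrank_submodule ▸ Submodule.finrank_lt_finrank_of_lt hlt
  exact Submodule.eq_of_le_of_finrank_le hsup (hW.trans_le hone_lt)

section Field

variable {K : Type} [Field K]

theorem ProjLine.toSubmodule_injective_s3 :
    Function.Injective (ProjLine.toSubmodule : ProjLine K → Submodule K (Fin 3 → K)) := by
  rintro ⟨_, _⟩ ⟨_, _⟩ rfl
  rfl

theorem ProjLine.eq_of_mem_points {L M : ProjLine K} {p q : P2 K} (hpq : p ≠ q)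
    (hpL : p ∈ L.points) (hqL : q ∈ L.points) (hpM : p ∈ M.points) (hqM : q ∈ M.points) :
    L = M :=
  ProjLine.toSubmodule_injective_s3 <|
    (submodule_sup_submodule_eq_of_finrank_eq_two L.finrank_eq_two hpq hpL hqL).symm.trans <|
      submodule_sup_submodule_eq_of_finrank_eq_two M.finrank_eq_two hpq hpM hqM

theorem IsKConfig.subset_iUnion_points {s : ℕ} {X : Set (P2 K)} {d : Fin s → ℕ}
    {Xs : Fin s → Set (P2 K)} {Ls : Fin s → ProjLine K} (hX : IsKConfig X d Xs Ls) :
    X ⊆ ⋃ i, (Ls i).points :=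
  hX.union_eq.trans_subset (Set.iUnion_mono hX.subset_line)

theorem kconfig_line_mem_general {ι : Type*} {X : Set (P2 K)} {Ls : ι → ProjLine K}
    (hX : X ⊆ ⋃ i, (Ls i).points) {L : ProjLine K} (hL : ENat.card ι < (X ∩ L.points).encard) :
    ∃ i, L = Ls i := by
  choose i hi using fun p : ↥(X ∩ L.points) => Set.mem_iUnion.1 (hX p.2.1)
  have hi_not_injective : ¬ Function.Injective i := fun h =>
    hL.not_ge (ENat.card_le_card_of_injective h)
  obtain ⟨p, q, hipq, hpq⟩ := Function.not_injective_iff.1 hi_not_injective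
  have hq : q.1 ∈ (Ls (i p)).points := hipq ▸ hi q
  exact ⟨i p, ProjLine.eq_of_mem_points (Subtype.coe_ne_coe.2 hpq) p.2.2 q.2.2 (hi p) hq⟩

end Field

/-- **Lemma (necessary conditions), part (i).** If `X` is a k-configuration of
type `(d₁,…,d_s)` with `d_s > s`, then any line containing exactly `d_s` points
of `X` is one of the defining lines `L₁,…,L_s`. -/
theorem kconfig_line_mem {K : Type} [Field K] [IsAlgClosed K] {s : ℕ} (hs : 0 < s)
    (X : Set (P2 K)) (d : Fin s → ℕ) (Xs : Fin s → Set (P2 K)) (Ls : Fin s → ProjLine K)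
    (hX : IsKConfig X d Xs Ls)
    (ds : ℕ) (hds : ds = d ⟨s - 1, Nat.sub_lt hs Nat.one_pos⟩)
    (hgt : s < ds) :
    ∀ L : ProjLine K, (X ∩ L.points).ncard = ds → ∃ i : Fin s, L = Ls i := by
  intro L hL
  exact kconfig_line_mem_general hX.subset_iUnion_points <| by
    simpa using (Nat.cast_lt.2 (hgt.trans_eq hL.symm)).trans_le (X ∩ L.points).ncard_le_encard
end

section
/- Let X ⊆ P² be a k-configuration of type (d₁,…,d_s) with s ≥ 2, defined using subsets X₁,…,X_s and lines L₁,…,L_s. Suppose there are indices 0 ≤ j < i ≤ s−1 such that |L_{s−k} ∩ X| = d_s for k = 0,…,j, |L_{s−k} ∩ X| < d_s for k = j+1,…,i−1, and |L_{s−i} ∩ X| = d_s. Set T = L_{s−i} ∩ (X_{s−j−1} ∪ X_{s−j−2} ∪ ⋯ ∪ X_{s−i+1}). Then X is also a k-configuration of type (d₁,…,d_s) defined using the subsets X'₁,…,X'_s and lines L'₁,…,L'_s given by: X'_k = X_k and L'_k = L_k for k = 1,…,s−i−1; X'_k = X_{k+1} \ T and L'_k = L_{k+1} for k = s−i,…,s−j−2;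 X'_{s−j−1} = X_{s−i} ∪ T and L'_{s−j−1} = L_{s−i}; and X'_k = X_k and L'_k = L_k for k = s−j,…,s. -/
/-!
Write `c` for the index of the line being moved. Two distinct lines share at most one point, and the
points of `X_t` with `t < c` avoid `L_c`, so `|L_c ∩ X| ≤ d_c + #{t | c < t} ≤ d_s`. When `L_c`
contains `d_s` points of `X` both inequalities are equalities: `L_c` meets every `X_t` with `t > c`
in exactly one point, and the type grows by exactly one at each step from `d_c` on. Hence moving
`L_c` up past `X_{c+1}, …, X_e` takes one point away from each of these subsets, which leaves `X_t`
with `d_{t-1}` points, and gives `L_c` the `e - c` points that raise `d_c` to `d_e`.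
-/

section Relabelling

open Fin Finset

lemma card_Ioc_le_card_Ioc_of_strictMono {α β : Type*} [LinearOrder α]
    [LocallyFiniteOrder α] [Preorder β] [LocallyFiniteOrder β] {f : α → β} (hf : StrictMono f)
    (a b : α) : #(Ioc a b) ≤ #(Ioc (f a) (f b)) :=
  card_le_card_of_injOn f
    (fun x hx => by
      rw [coe_Ioc] at hx ⊢
      exact ⟨hf hx.1, hf.monotone hx.2⟩)
    hf.injective.injOn

lemma val_cycleIcc_of_ge_of_lt {n : ℕ} {i j k : Fin n} (hik : i ≤ k) (hkj : k < j) :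
    (cycleIcc i j k : ℕ) = k + 1 := by
  have : NeZero n := .of_pos k.pos
  rw [cycleIcc_of_ge_of_lt hik hkj, val_add_one_of_lt' (by lia)]

lemma cycleIcc_of_notMem_Icc {n : ℕ} {i j k : Fin n} (hk : k ∉ Icc i j) :
    cycleIcc i j k = k := by
  rw [mem_Icc, not_and_or, not_le, not_le] at hk
  exact hk.elim cycleIcc_of_lt cycleIcc_of_gt

lemma cycleIcc_mem_Ioc {n : ℕ} {i j k : Fin n} (hik : i ≤ k) (hkj : k < j) :
    cycleIcc i j k ∈ Ioc i j := by
  have := val_cycleIcc_of_ge_of_lt hik hkj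
  rw [mem_Ioc]
  lia

lemma strictMonoOn_cycleIcc {n : ℕ} (i j : Fin n) : StrictMonoOn (cycleIcc i j) {j}ᶜ := by
  intro a ha b hb hab
  grind [cycleIcc_of_lt, cycleIcc_of_gt, val_cycleIcc_of_ge_of_lt]

namespace ProjLine

variable {K : Type} [Field K] {L M : ProjLine K}

lemma toSubmodule_injective_s7 : Function.Injective (toSubmodule (K := K))
  | ⟨_, _⟩, ⟨_, _⟩, rfl => rfl

lemma finrank_inf_lt_two (h : L ≠ M) :
    Module.finrank K ↥(L.toSubmodule ⊓ M.toSubmodule) < 2 := by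
  rw [← L.finrank_eq_two]
  refine Submodule.finrank_lt_finrank_of_lt (inf_lt_left.2 fun hle => h ?_)
  exact toSubmodule_injective_s7 <| Submodule.eq_of_le_of_finrank_eq hle
    (L.finrank_eq_two.trans M.finrank_eq_two.symm)

lemma subsingleton_points_inter_points (h : L ≠ M) : (L.points ∩ M.points).Subsingleton := by
  have submodule_eq : ∀ p ∈ L.points ∩ M.points,
      p.submodule = L.toSubmodule ⊓ M.toSubmodule := fun p hp =>
    Submodule.eq_of_le_of_finrank_le (le_inf hp.1 hp.2) <| by
      rw [p.finrank_submodule]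
      exact Nat.le_of_lt_succ (finrank_inf_lt_two h)
  intro p hp q hq
  exact Projectivization.submodule_injective ((submodule_eq p hp).trans (submodule_eq q hq).symm)

end ProjLine

namespace IsKConfig

variable {K : Type} [Field K] {s : ℕ} {X : Set (P2 K)} {d : Fin s → ℕ}
  {Xs : Fin s → Set (P2 K)} {Ls : Fin s → ProjLine K} {a c : Fin s}

lemma finite_subset (hX : IsKConfig X d Xs Ls) (a : Fin s) : (Xs a).Finite :=
  Set.finite_of_ncard_pos <| hX.card_eq a ▸ hX.one_le a

lemma disjoint_points (hX : IsKConfig X d Xs Ls) (hac : a < c) :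
    Disjoint (Xs a) (Ls c).points :=
  Set.disjoint_left.2 (hX.not_mem c a hac)

lemma pairwise_disjoint (hX : IsKConfig X d Xs Ls) : Pairwise (Function.onFun Disjoint Xs) :=
  (pairwise_disjoint_on Xs).2 fun _ b hab =>
    (hX.disjoint_points hab).mono_right (hX.subset_line b)

lemma ncard_inter_points_le_one (hX : IsKConfig X d Xs Ls) (hac : a ≠ c) :
    (Xs a ∩ (Ls c).points).ncard ≤ 1 := by
  have hlines := ProjLine.subsingleton_points_inter_points (hX.lines_distinct.ne hac)
  have : Finite (Xs a ∩ (Ls c).points : Set (P2 K)) := (hX.finite_subset a).inter_of_left _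
  exact Set.ncard_le_one_iff_subsingleton.2
    (hlines.anti (Set.inter_subset_inter_left _ (hX.subset_line a)))

lemma ncard_inter_points (hX : IsKConfig X d Xs Ls) (c : Fin s) :
    (X ∩ (Ls c).points).ncard = d c + ∑ a ∈ Ioi c, (Xs a ∩ (Ls c).points).ncard := by
  have hbelow : ∀ a ∉ Ici c, (Xs a ∩ (Ls c).points).ncard = 0 := fun a ha => by
    rw [(hX.disjoint_points (by simpa using ha)).inter_eq, Set.ncard_empty]
  have hown : (Xs c ∩ (Ls c).points).ncard = d c := by
    rw [Set.inter_eq_left.2 (hX.subset_line c), hX.card_eq]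
  calc (X ∩ (Ls c).points).ncard
      = ∑ a, (Xs a ∩ (Ls c).points).ncard := by
        rw [hX.union_eq, Set.iUnion_inter, Set.ncard_iUnion_of_finite
          (fun a => (hX.finite_subset a).inter_of_left _)
          (fun a b hab => (hX.pairwise_disjoint hab).mono Set.inter_subset_left
            Set.inter_subset_left), finsum_eq_sum_of_fintype]
    _ = ∑ a ∈ Ici c, (Xs a ∩ (Ls c).points).ncard :=
        (sum_subset (subset_univ _) fun a _ => hbelow a).symm
    _ = d c + ∑ a ∈ Ioi c, (Xs a ∩ (Ls c).points).ncard := by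
        rw [← Ioi_insert, sum_insert (by simp), hown]

lemma type_add_card_Ioc_le (hX : IsKConfig X d Xs Ls) (hac : a ≤ c) :
    d a + #(Ioc a c) ≤ d c := by
  have hgap := card_Ioc_le_card_Ioc_of_strictMono hX.strictMono a c
  have hle := hX.strictMono.monotone hac
  rw [Nat.card_Ioc] at hgap
  lia

lemma type_add_card_Ioi_le_ncard (hX : IsKConfig X d Xs Ls)
    (hfull : ∀ b, d b ≤ (X ∩ (Ls c).points).ncard) (a : Fin s) :
    d a + #(Ioi a) ≤ (X ∩ (Ls c).points).ncard := by
  have hgap := hX.type_add_card_Ioc_le (a := a) (c := ⟨s - 1, Nat.sub_one_lt_of_lt a.2⟩)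
    (Nat.le_sub_one_of_lt a.2)
  rw [Fin.card_Ioc] at hgap
  rw [Fin.card_Ioi]
  exact hgap.trans (hfull _)

lemma ncard_inter_points_eq_one (hX : IsKConfig X d Xs Ls)
    (hfull : ∀ b, d b ≤ (X ∩ (Ls c).points).ncard) (hca : c < a) :
    (Xs a ∩ (Ls c).points).ncard = 1 := by
  have hle : ∀ b ∈ Ioi c, (Xs b ∩ (Ls c).points).ncard ≤ 1 := fun b hb =>
    hX.ncard_inter_points_le_one (mem_Ioi.1 hb).ne'
  have hge := hX.type_add_card_Ioi_le_ncard hfull c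
  rw [hX.ncard_inter_points, Nat.add_le_add_iff_left, card_eq_sum_ones] at hge
  exact (sum_eq_sum_iff_of_le hle).1 ((sum_le_sum hle).antisymm hge) a (mem_Ioi.2 hca)

lemma type_eq_add_card_Ioc (hX : IsKConfig X d Xs Ls)
    (hfull : ∀ b, d b ≤ (X ∩ (Ls c).points).ncard) (hca : c ≤ a) :
    d a = d c + #(Ioc c a) := by
  refine le_antisymm ?_ (hX.type_add_card_Ioc_le hca)
  have hlast := hX.type_add_card_Ioi_le_ncard hfull a
  rw [hX.ncard_inter_points, sum_congr rfl fun b hb =>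
    hX.ncard_inter_points_eq_one hfull (mem_Ioi.1 hb), ← card_eq_sum_ones] at hlast
  simp only [card_Ioi, card_Ioc] at hlast ⊢
  lia

end IsKConfig

/-- The set `T` of the relabelling: the points of the subsets `Xs t` with `c < t ≤ e` that lie on
the line `Ls c`. In the one-based indexing of the paper `c = s - i` and `e = s - j - 1`. -/
def transferredPoints {K : Type} [Field K] {s : ℕ} (Xs : Fin s → Set (P2 K))
    (Ls : Fin s → ProjLine K) (c e : Fin s) : Set (P2 K) :=
  (Ls c).points ∩ ⋃ t ∈ Ioc c e, Xs t

/-- The relabelled subsets `X'`, to be used with the lines `Ls ∘ cycleIcc c e`: the line `Ls c`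
moves to position `e` and collects all its points in the `Xs t` with `c < t ≤ e`. Outside `[c, e]`
the removal of the transferred points has no effect, so only position `e` needs a separate value. -/
def relabelledSubsets {K : Type} [Field K] {s : ℕ} (Xs : Fin s → Set (P2 K))
    (Ls : Fin s → ProjLine K) (c e : Fin s) : Fin s → Set (P2 K) :=
  Function.update (fun a => Xs (cycleIcc c e a) \ transferredPoints Xs Ls c e) e
    (Xs c ∪ transferredPoints Xs Ls c e)

section RelabelledSubsets

variable {K : Type} [Field K] {s : ℕ} {X : Set (P2 K)} {d : Fin s → ℕ}
  {Xs : Fin s → Set (P2 K)} {Ls : Fin s → ProjLine K} {a b c e : Fin s} {p : P2 K}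

lemma mem_transferredPoints :
    p ∈ transferredPoints Xs Ls c e ↔ p ∈ (Ls c).points ∧ ∃ t, (c < t ∧ t ≤ e) ∧ p ∈ Xs t := by
  simp [transferredPoints]

lemma inter_transferredPoints (ha : a ∈ Ioc c e) :
    Xs a ∩ transferredPoints Xs Ls c e = Xs a ∩ (Ls c).points := by
  have hsub : Xs a ⊆ ⋃ t ∈ Ioc c e, Xs t := Set.subset_biUnion_of_mem (u := Xs) ha
  rw [transferredPoints, Set.inter_left_comm, Set.inter_eq_left.2 hsub, Set.inter_comm]

lemma disjoint_sdiff_transferredPoints_points (ha : a ∈ Ioc c e) :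
    Disjoint (Xs a \ transferredPoints Xs Ls c e) (Ls c).points := by
  rw [← Set.sdiff_inter_self_eq_sdiff, Set.inter_comm, inter_transferredPoints ha]
  exact Set.disjoint_left.2 fun p hp hpc => hp.2 ⟨hp.1, hpc⟩

lemma relabelledSubsets_self :
    relabelledSubsets Xs Ls c e e = Xs c ∪ transferredPoints Xs Ls c e :=
  Function.update_self ..

lemma relabelledSubsets_of_ne (hae : a ≠ e) :
    relabelledSubsets Xs Ls c e a = Xs (cycleIcc c e a) \ transferredPoints Xs Ls c e :=
  Function.update_of_ne hae ..

lemma iUnion_relabelledSubsets (hce : c ≤ e) :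
    ⋃ a, relabelledSubsets Xs Ls c e a = ⋃ a, Xs a := by
  have : NeZero s := .of_pos c.pos
  apply subset_antisymm
  · refine Set.iUnion_subset fun a p hp => ?_
    rcases eq_or_ne a e with rfl | hae
    · rw [relabelledSubsets_self] at hp
      rcases hp with hp | hp
      · exact Set.mem_iUnion_of_mem c hp
      · obtain ⟨_, t, _, hpt⟩ := mem_transferredPoints.1 hp
        exact Set.mem_iUnion_of_mem t hpt
    · rw [relabelledSubsets_of_ne hae] at hp
      exact Set.mem_iUnion_of_mem _ hp.1
  · refine Set.iUnion_subset fun b p hp => ?_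
    by_cases hpe : p ∈ Xs c ∪ transferredPoints Xs Ls c e
    · rw [← relabelledSubsets_self] at hpe
      exact Set.mem_iUnion_of_mem e hpe
    · obtain ⟨a, rfl⟩ := (cycleIcc c e).surjective b
      have hae : a ≠ e := by
        rintro rfl
        exact hpe (.inl (cycleIcc_of_last hce ▸ hp))
      refine Set.mem_iUnion_of_mem a ?_
      rw [relabelledSubsets_of_ne hae]
      exact ⟨hp, fun hpT => hpe (.inr hpT)⟩

namespace IsKConfig

lemma disjoint_transferredPoints (hX : IsKConfig X d Xs Ls) (ha : a ∉ Ioc c e) :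
    Disjoint (Xs a) (transferredPoints Xs Ls c e) := by
  refine Disjoint.inter_right' _ (Set.disjoint_iUnion₂_right.2 fun t ht => ?_)
  exact hX.pairwise_disjoint fun hat => ha (hat ▸ ht)

lemma disjoint_transferredPoints_points (hX : IsKConfig X d Xs Ls) (heb : e < b) :
    Disjoint (transferredPoints Xs Ls c e) (Ls b).points :=
  Disjoint.inter_left' _ <| Set.disjoint_iUnion₂_left.2 fun _ ht =>
    hX.disjoint_points ((mem_Ioc.1 ht).2.trans_lt heb)

lemma finite_transferredPoints (hX : IsKConfig X d Xs Ls) :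
    (transferredPoints Xs Ls c e).Finite :=
  ((Ioc c e).finite_toSet.biUnion fun t _ => hX.finite_subset t).inter_of_right _

lemma ncard_transferredPoints (hX : IsKConfig X d Xs Ls)
    (hfull : ∀ b, d b ≤ (X ∩ (Ls c).points).ncard) :
    (transferredPoints Xs Ls c e).ncard = #(Ioc c e) := by
  calc (transferredPoints Xs Ls c e).ncard
      = (⋃ t ∈ (Ioc c e : Set (Fin s)), Xs t ∩ (Ls c).points).ncard := by
        simp only [transferredPoints, mem_coe, Set.inter_comm (Ls c).points, Set.iUnion₂_inter]
    _ = ∑ t ∈ Ioc c e, (Xs t ∩ (Ls c).points).ncard := by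
        rw [(finite_toSet _).ncard_biUnion (fun t _ => (hX.finite_subset t).inter_of_left _)
          (fun t _ u _ htu => (hX.pairwise_disjoint htu).mono Set.inter_subset_left
            Set.inter_subset_left), finsum_mem_coe_finset]
    _ = #(Ioc c e) := by
        rw [card_eq_sum_ones]
        exact sum_congr rfl fun t ht => hX.ncard_inter_points_eq_one hfull (mem_Ioc.1 ht).1

lemma relabelledSubsets_of_notMem_Icc (hX : IsKConfig X d Xs Ls) (ha : a ∉ Icc c e)
    (hce : c ≤ e) : relabelledSubsets Xs Ls c e a = Xs a := by
  have hae : a ≠ e := by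
    rintro rfl
    exact ha (mem_Icc.2 ⟨hce, le_rfl⟩)
  have hdisj := hX.disjoint_transferredPoints fun h => ha (Ioc_subset_Icc_self h)
  rw [relabelledSubsets_of_ne hae, cycleIcc_of_notMem_Icc ha, hdisj.sdiff_eq_left]

lemma ncard_relabelledSubsets_of_mem_Ico (hX : IsKConfig X d Xs Ls)
    (hfull : ∀ b, d b ≤ (X ∩ (Ls c).points).ncard) (hca : c ≤ a) (hae : a < e) :
    (relabelledSubsets Xs Ls c e a).ncard = d a := by
  have hmem := cycleIcc_mem_Ioc hca hae
  have hcard := Set.ncard_inter_add_ncard_sdiff_eq_ncard (Xs (cycleIcc c e a))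
    (transferredPoints Xs Ls c e) (hX.finite_subset _)
  rw [inter_transferredPoints hmem, hX.ncard_inter_points_eq_one hfull (mem_Ioc.1 hmem).1,
    hX.card_eq, hX.type_eq_add_card_Ioc hfull (mem_Ioc.1 hmem).1.le, Fin.card_Ioc,
    val_cycleIcc_of_ge_of_lt hca hae] at hcard
  rw [relabelledSubsets_of_ne hae.ne, hX.type_eq_add_card_Ioc hfull hca, Fin.card_Ioc]
  lia

lemma ncard_relabelledSubsets (hX : IsKConfig X d Xs Ls) (hce : c ≤ e)
    (hfull : ∀ b, d b ≤ (X ∩ (Ls c).points).ncard) (a : Fin s) :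
    (relabelledSubsets Xs Ls c e a).ncard = d a := by
  by_cases ha : a ∈ Icc c e
  · obtain ⟨hca, hae⟩ := mem_Icc.1 ha
    rcases hae.lt_or_eq with hae | rfl
    · exact hX.ncard_relabelledSubsets_of_mem_Ico hfull hca hae
    · rw [relabelledSubsets_self, Set.ncard_union_eq (hX.disjoint_transferredPoints (by simp))
        (hX.finite_subset c) hX.finite_transferredPoints, hX.card_eq,
        hX.ncard_transferredPoints hfull, ← hX.type_eq_add_card_Ioc hfull hce]
  · rw [hX.relabelledSubsets_of_notMem_Icc ha hce, hX.card_eq]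

lemma relabelledSubsets_subset_points (hX : IsKConfig X d Xs Ls) (hce : c ≤ e) (a : Fin s) :
    relabelledSubsets Xs Ls c e a ⊆ (Ls (cycleIcc c e a)).points := by
  rcases eq_or_ne a e with rfl | hae
  · have : NeZero s := .of_pos c.pos
    rw [relabelledSubsets_self, cycleIcc_of_last hce]
    exact Set.union_subset (hX.subset_line c) Set.inter_subset_left
  · rw [relabelledSubsets_of_ne hae]
    exact Set.sdiff_subset.trans (hX.subset_line _)

lemma disjoint_relabelledSubsets_points (hX : IsKConfig X d Xs Ls) (hce : c ≤ e) (hab : a < b) :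
    Disjoint (relabelledSubsets Xs Ls c e a) (Ls (cycleIcc c e b)).points := by
  have : NeZero s := .of_pos c.pos
  rcases eq_or_ne a e with rfl | hae
  · rw [relabelledSubsets_self, cycleIcc_of_gt hab]
    exact (hX.disjoint_points (hce.trans_lt hab)).union_left
      (hX.disjoint_transferredPoints_points hab)
  rw [relabelledSubsets_of_ne hae]
  rcases eq_or_ne b e with rfl | hbe
  · rw [cycleIcc_of_last hce]
    rcases lt_or_ge a c with hac | hca
    · rw [cycleIcc_of_lt hac]
      exact (hX.disjoint_points hac).mono_left Set.sdiff_subset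
    · exact disjoint_sdiff_transferredPoints_points (cycleIcc_mem_Ioc hca hab)
  · exact (hX.disjoint_points (strictMonoOn_cycleIcc c e hae hbe hab)).mono_left Set.sdiff_subset

theorem relabel (hX : IsKConfig X d Xs Ls) (hce : c ≤ e)
    (hfull : ∀ b, d b ≤ (X ∩ (Ls c).points).ncard) :
    IsKConfig X d (relabelledSubsets Xs Ls c e) (Ls ∘ cycleIcc c e) where
  one_le := hX.one_le
  strictMono := hX.strictMono
  lines_distinct := hX.lines_distinct.comp (cycleIcc c e).injective
  union_eq := hX.union_eq.trans (iUnion_relabelledSubsets hce).symm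
  card_eq := hX.ncard_relabelledSubsets hce hfull
  subset_line := hX.relabelledSubsets_subset_points hce
  not_mem _ _ hba _ hp := Set.disjoint_left.1 (hX.disjoint_relabelledSubsets_points hce hba) hp

end IsKConfig

end RelabelledSubsets

theorem kconfig_relabel_general {K : Type} [Field K] {s : ℕ}
    (X : Set (P2 K)) (d : Fin s → ℕ) (Xs : Fin s → Set (P2 K)) (Ls : Fin s → ProjLine K)
    (hX : IsKConfig X d Xs Ls)
    (j i : ℕ) (hji : j < i) (his : i ≤ s - 1)
    (hlow : d ⟨s - 1, by omega⟩ ≤ (X ∩ (Ls ⟨s - 1 - i, by omega⟩).points).ncard)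
    (T : Set (P2 K))
    (hT : T = (Ls ⟨s - 1 - i, by omega⟩).points ∩
      {p : P2 K | ∃ t : Fin s, s - i + 1 ≤ t.1 + 1 ∧ t.1 + 1 ≤ s - j - 1 ∧ p ∈ Xs t}) :
    ∃ (Xs' : Fin s → Set (P2 K)) (Ls' : Fin s → ProjLine K),
      IsKConfig X d Xs' Ls' ∧
      (∀ a : Fin s, a.1 + 1 ≤ s - i - 1 → Xs' a = Xs a ∧ Ls' a = Ls a) ∧
      (∀ a b : Fin s, b.1 = a.1 + 1 → s - i ≤ a.1 + 1 → a.1 + 1 ≤ s - j - 2 →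
        Xs' a = Xs b \ T ∧ Ls' a = Ls b) ∧
      (∀ a c : Fin s, a.1 + 1 = s - j - 1 → c.1 + 1 = s - i →
        Xs' a = Xs c ∪ T ∧ Ls' a = Ls c) ∧
      (∀ a : Fin s, s - j ≤ a.1 + 1 → Xs' a = Xs a ∧ Ls' a = Ls a) := by
  have : NeZero s := ⟨by omega⟩
  let c : Fin s := ⟨s - 1 - i, by omega⟩
  let e : Fin s := ⟨s - 2 - j, by omega⟩
  have hce : c ≤ e := by simp only [c, e, le_def]; omega
  have hfull : ∀ b, d b ≤ (X ∩ (Ls c).points).ncard := fun b =>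
    (hX.strictMono.monotone (Nat.le_sub_one_of_lt b.2)).trans hlow
  have hTeq : T = transferredPoints Xs Ls c e := by
    ext p
    rw [hT, mem_transferredPoints]
    refine and_congr_right fun _ => exists_congr fun t => ?_
    rw [← and_assoc, lt_def, le_def]
    exact and_congr_left fun _ => by simp only [c, e]; omega
  have hfixed : ∀ a ∉ Icc c e,
      relabelledSubsets Xs Ls c e a = Xs a ∧ Ls (cycleIcc c e a) = Ls a := fun a ha =>
    ⟨hX.relabelledSubsets_of_notMem_Icc ha hce, by rw [cycleIcc_of_notMem_Icc ha]⟩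
  simp only [mem_Icc, le_def, c, e] at hfixed
  refine ⟨_, _, hX.relabel hce hfull, fun a ha => hfixed a (by omega), ?shifted, ?moved,
    fun a ha => hfixed a (by omega)⟩
  case shifted =>
    intro a b hab hca hale
    have hae : a < e := by simp only [e, lt_def]; omega
    obtain rfl : cycleIcc c e a = b := Fin.ext <|
      (val_cycleIcc_of_ge_of_lt (by simp only [c, le_def]; omega) hae).trans hab.symm
    exact ⟨hTeq ▸ relabelledSubsets_of_ne hae.ne, rfl⟩
  case moved =>
    intro a c' ha hc'
    obtain rfl : a = e := Fin.ext (by simp only [e]; omega)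
    obtain rfl : c' = c := Fin.ext (by simp only [c]; omega)
    exact ⟨hTeq ▸ relabelledSubsets_self, congrArg Ls (cycleIcc_of_last hce)⟩

end Relabelling

/-- **Lemma (relabelling).** Suppose `X` is a k-configuration of type
`(d₁,…,d_s)`, `s ≥ 2`, defined by subsets `X₁,…,X_s` and lines `L₁,…,L_s`,
with `|L_{s−k} ∩ X| = d_s` for `k = 0,…,j`, `|L_{s−k} ∩ X| < d_s` for
`k = j+1,…,i−1`, and `|L_{s−i} ∩ X| = d_s`, where `0 ≤ j < i ≤ s−1`.  Set
`T = L_{s−i} ∩ (X_{s−j−1} ∪ ⋯ ∪ X_{s−i+1})`.  Then `X` is also a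
k-configuration of the same type defined by the relabelled data `X'ₖ`, `L'ₖ`.
(Math index `k ∈ {1,…,s}` corresponds to `a : Fin s` via `k = a + 1`.) -/
theorem kconfig_relabel {K : Type} [Field K] [IsAlgClosed K] {s : ℕ} (hs : 2 ≤ s)
    (X : Set (P2 K)) (d : Fin s → ℕ) (Xs : Fin s → Set (P2 K)) (Ls : Fin s → ProjLine K)
    (hX : IsKConfig X d Xs Ls)
    (ds : ℕ) (hds : ds = d ⟨s - 1, by omega⟩)
    (j i : ℕ) (hji : j < i) (his : i ≤ s - 1)
    (htop : ∀ k : ℕ, k ≤ j → (X ∩ (Ls ⟨s - 1 - k, by omega⟩).points).ncard = ds)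
    (hmid : ∀ k : ℕ, j + 1 ≤ k → k ≤ i - 1 →
      (X ∩ (Ls ⟨s - 1 - k, by omega⟩).points).ncard < ds)
    (hlow : (X ∩ (Ls ⟨s - 1 - i, by omega⟩).points).ncard = ds)
    (T : Set (P2 K))
    (hT : T = (Ls ⟨s - 1 - i, by omega⟩).points ∩
      {p : P2 K | ∃ t : Fin s, s - i + 1 ≤ t.1 + 1 ∧ t.1 + 1 ≤ s - j - 1 ∧ p ∈ Xs t}) :
    ∃ (Xs' : Fin s → Set (P2 K)) (Ls' : Fin s → ProjLine K),
      IsKConfig X d Xs' Ls' ∧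
      (∀ a : Fin s, a.1 + 1 ≤ s - i - 1 → Xs' a = Xs a ∧ Ls' a = Ls a) ∧
      (∀ a b : Fin s, b.1 = a.1 + 1 → s - i ≤ a.1 + 1 → a.1 + 1 ≤ s - j - 2 →
        Xs' a = Xs b \ T ∧ Ls' a = Ls b) ∧
      (∀ a c : Fin s, a.1 + 1 = s - j - 1 → c.1 + 1 = s - i →
        Xs' a = Xs c ∪ T ∧ Ls' a = Ls c) ∧
      (∀ a : Fin s, s - j ≤ a.1 + 1 → Xs' a = Xs a ∧ Ls' a = Ls a) :=
  kconfig_relabel_general X d Xs Ls hX j i hji his (hlow.trans hds).ge T hT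
end
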